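/- Let (R, m, k) be a Noetherian local ring, S := R[X_1,…,X_n] a graded polynomial ring over R with deg X_i > 0 (and R in degree 0), and M a finitely generated graded S-module. Set M̄ := M ⊗_R k and d := dim(M̄). Then: the natural graded map H^d_{S_+}(M) ⊗_R k → H^d_{S_+}(M̄) is an isomorphism; d = max{ i : H^i_{S_+}(M) ≠ 0 } (in particular H^i_{S_+}(M) = 0 for i > d); and a^d(M) = a^d(M̄) ∈ ℤ. -/

import Mathlib

noncomputable section CechCore

variable (A : Type) [CommRing A] {n : ℕ} (x : Fin n → A)
  (M : Type) [AddCommGroup M] [Module A M]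

/-- The localization of `M` at the powers of `∏ i ∈ S, x i`. -/
abbrev cechL (S : Finset (Fin n)) : Type :=
  LocalizedModule (Submonoid.powers (∏ i ∈ S, x i)) M

/-- The `p`-th term of the (stable Koszul/Čech) complex of `M` with respect to `x`. -/
abbrev cechC (p : ℕ) : Type := ∀ S : {S : Finset (Fin n) // S.card = p}, cechL A x M S.1

/-- The localization map between Čech localizations, for `S ⊆ T`. -/
def cechMap (S T : Finset (Fin n)) (h : S ⊆ T) : cechL A x M S →ₗ[A] cechL A x M T :=
  LocalizedModule.lift _ (LocalizedModule.mkLinearMap (Submonoid.powers (∏ i ∈ T, x i)) M)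
    (by
      rintro ⟨s, k, rfl⟩
      simp only [map_pow]
      refine IsUnit.pow k ?_
      have hu : IsUnit ((algebraMap A (Module.End A (cechL A x M T))) (∏ i ∈ T, x i)) :=
        IsLocalizedModule.map_units (LocalizedModule.mkLinearMap _ M)
          ⟨∏ i ∈ T, x i, Submonoid.mem_powers _⟩
      have h2 : (∏ i ∈ T, x i) = (∏ i ∈ T \ S, x i) * ∏ i ∈ S, x i :=
        (Finset.prod_sdiff h).symm
      have hu' : IsUnit ((algebraMap A (Module.End A (cechL A x M T)))
          ((∏ i ∈ T \ S, x i) * ∏ i ∈ S, x i)) := by rw [← h2]; exact hu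
      rw [map_mul] at hu'
      exact (((Commute.all ((∏ i ∈ T \ S, x i)) (∏ i ∈ S, x i)).map
        (algebraMap A (Module.End A (cechL A x M T))).toMonoidHom).isUnit_mul_iff.mp hu').2)

/-- The Čech differential. -/
def cechD (p : ℕ) : cechC A x M p →ₗ[A] cechC A x M (p + 1) :=
  LinearMap.pi fun T =>
    ∑ j ∈ T.1.attach,
      ((-1 : A) ^ (T.1.filter (fun a => a < j.1)).card) •
        ((cechMap A x M (T.1.erase j.1) T.1 (Finset.erase_subset _ _)).comp
          (LinearMap.proj (⟨T.1.erase j.1, by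
            simp [Finset.card_erase_of_mem j.2, T.2]⟩ : {S : Finset (Fin n) // S.card = p})))

/-- `c` is a coboundary in the Čech complex. -/
def cechIsBoundary : (p : ℕ) → cechC A x M p → Prop
  | 0, c => c = 0
  | (q + 1), c => ∃ b : cechC A x M q, cechD A x M q b = c

/-- The degree-`μ` graded piece of a Čech localization, for a grading `ℳ` of `M`
over a grading of `A` in which `x i` has degree `w i`. -/
def cechGrade (ℳ : ℤ → AddSubgroup M) (w : Fin n → ℤ) (μ : ℤ) (S : Finset (Fin n)) :
    AddSubgroup (cechL A x M S) :=
  AddSubgroup.closure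
    {c | ∃ (m : M) (k : ℕ), m ∈ ℳ (μ + k * (∑ i ∈ S, w i)) ∧
      c = LocalizedModule.mk m ⟨(∏ i ∈ S, x i) ^ k, Submonoid.pow_mem _ (Submonoid.mem_powers _) k⟩}

/-- `H^i_{(x)}(M)_μ ≠ 0`: there is a homogeneous degree-`μ` cocycle in the Čech complex
which is not a coboundary.  This is the nonvanishing of the degree-`μ` part of the `i`-th
local cohomology of the graded module `M` supported on the ideal generated by `x`. -/
def lcGradeNonzero (ℳ : ℤ → AddSubgroup M) (w : Fin n → ℤ) (i : ℕ) (μ : ℤ) : Prop :=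
  ∃ c : cechC A x M i, (∀ T, c T ∈ cechGrade A x M ℳ w μ T.1) ∧
    cechD A x M i c = 0 ∧ ¬ cechIsBoundary A x M i c

/-- `H^i_{(x)}(M) = 0` : every Čech cocycle is a coboundary. -/
def lcVanish (i : ℕ) : Prop :=
  ∀ c : cechC A x M i, cechD A x M i c = 0 → cechIsBoundary A x M i c

/-- The map from the previous term of the Čech complex (declared as the zero map in
homological degree `0`). -/
def cechDprev : (i : ℕ) → (cechC A x M (i - 1) →ₗ[A] cechC A x M i)
  | 0 => 0
  | (q + 1) => cechD A x M q

/-- The `i`-th local cohomology module of `M` supported on the ideal generated by `x`,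
defined as cocycles modulo (cocycles ∩ boundaries) of the Čech complex. -/
def lcMod (i : ℕ) : Type :=
  ↥(LinearMap.ker (cechD A x M i)) ⧸
    (Submodule.comap (LinearMap.ker (cechD A x M i)).subtype
      (LinearMap.range (cechDprev A x M i)))

instance (i : ℕ) : AddCommGroup (lcMod A x M i) := by unfold lcMod; infer_instance
instance (i : ℕ) : Module A (lcMod A x M i) := by unfold lcMod; infer_instance

/-- The ideal of elements of positive degree of a graded ring. -/
def irrelevantIdeal (𝒜 : ℤ → AddSubgroup A) : Ideal A :=
  Ideal.span {a : A | ∃ μ > 0, a ∈ 𝒜 μ}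

end CechCore

noncomputable section TmulCore

variable (R : Type) [CommRing R] (S : Type) [CommRing S] [Algebra R S]
variable (M : Type) [AddCommGroup M] [Module R M] [Module S M] [IsScalarTower R S M]
variable (N : Type) [AddCommGroup N] [Module R N]

/-- The `S`-linear map `m ↦ m ⊗ n`. -/
def tmulRightS (nn : N) : M →ₗ[S] TensorProduct R M N where
  toFun := fun m => m ⊗ₜ[R] nn
  map_add' := fun a b => TensorProduct.add_tmul a b nn
  map_smul' := fun s m => by simp [TensorProduct.smul_tmul']

/-- The canonical map `(M_f) ⊗_R N → (M ⊗_R N)_f` at the level of Čech localizations,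
sending `m/f^k ⊗ n` to `(m ⊗ n)/f^k`. -/
def cechTmul {n : ℕ} (x : Fin n → S) (T : Finset (Fin n))
    (c : cechL S x M T) (nn : N) : cechL S x (TensorProduct R M N) T :=
  LocalizedModule.lift _
    ((LocalizedModule.mkLinearMap (Submonoid.powers (∏ i ∈ T, x i))
        (TensorProduct R M N)).comp (tmulRightS R S M N nn))
    (fun s => IsLocalizedModule.map_units
      (LocalizedModule.mkLinearMap (Submonoid.powers (∏ i ∈ T, x i)) (TensorProduct R M N)) s) c

end TmulCore

/-!
Let `𝔪` be the maximal ideal of `R` and `k = R ⧸ 𝔪`. Homogeneous prime avoidance provides `d`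
homogeneous elements `y` of positive degree which generate the irrelevant ideal up to radical modulo
the annihilator of `M ⊗ k`. By Nakayama's lemma, applied in each degree, they also do so modulo the
annihilator of `M`. Čech cohomology only sees this radical, so `H^i` vanishes for `i > d` on every
module killed by the annihilator of `M`. Hence `H^d` is right exact on these modules and commutes
with `⊗ k`.

Induction on `d` along multiplication by the last element of `y` shows that the graded pieces of
`H^d(M)` are finitely generated over `R` and vanish in large degrees, so by Nakayama's lemma those
of `M` and of `M ⊗ k` vanish simultaneously.

Finally `M ⊗ k` is finite and faithful over the polynomial ring `k[y]`, hence has a nonzero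
`k[y]`-linear form. If `H^d(M ⊗ k)` vanished, every element would be sent by a power of `∏ y` into
the submodule generated by larger powers of the `y j`, and applying the linear form would
contradict the independence of monomials.
-/

section CechComplex

variable {A : Type} [CommRing A] {n : ℕ} (x : Fin n → A)
  {M : Type} [AddCommGroup M] [Module A M]
  {N : Type} [AddCommGroup N] [Module A N]
  {P : Type} [AddCommGroup P] [Module A P]

/-- The fraction `m / (∏ i ∈ S, x i) ^ k` in a Čech localization. -/
noncomputable def cechFrac (S : Finset (Fin n)) (m : M) (k : ℕ) : cechL A x M S :=
  LocalizedModule.mk m ⟨(∏ i ∈ S, x i) ^ k, Submonoid.pow_mem _ (Submonoid.mem_powers _) k⟩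

theorem exists_eq_cechFrac (S : Finset (Fin n)) (c : cechL A x M S) :
    ∃ m k, c = cechFrac x S m k := by
  induction c using LocalizedModule.induction_on with
  | h m s =>
    obtain ⟨_, k, rfl⟩ := s
    exact ⟨m, k, rfl⟩

theorem cechFrac_eq_cechFrac_iff (S : Finset (Fin n)) (m m' : M) (k l : ℕ) :
    cechFrac x S m k = cechFrac x S m' l ↔
      ∃ j, (∏ i ∈ S, x i) ^ (j + l) • m = (∏ i ∈ S, x i) ^ (j + k) • m' := by
  simp only [cechFrac, LocalizedModule.mk_eq, Subtype.exists, Submonoid.smul_def, smul_smul]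
  constructor
  · rintro ⟨_, ⟨j, rfl⟩, h⟩
    exact ⟨j, by simpa only [← pow_add] using h⟩
  · rintro ⟨j, h⟩
    exact ⟨_, ⟨j, rfl⟩, by simpa only [← pow_add] using h⟩

theorem cechFrac_zero (S : Finset (Fin n)) (k : ℕ) : cechFrac x S (0 : M) k = 0 :=
  LocalizedModule.zero_mk _

theorem cechFrac_eq_zero_iff (S : Finset (Fin n)) (m : M) (k : ℕ) :
    cechFrac x S m k = 0 ↔ ∃ j, (∏ i ∈ S, x i) ^ j • m = 0 := by
  simp [← cechFrac_zero x S 0, cechFrac_eq_cechFrac_iff]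

theorem smul_cechFrac (S : Finset (Fin n)) (a : A) (m : M) (k : ℕ) :
    a • cechFrac x S m k = cechFrac x S (a • m) k :=
  LocalizedModule.smul'_mk _ _ _

theorem cechFrac_pow_smul (S : Finset (Fin n)) (m : M) (k l : ℕ) :
    cechFrac x S ((∏ i ∈ S, x i) ^ l • m) (k + l) = cechFrac x S m k := by
  rw [cechFrac_eq_cechFrac_iff]
  exact ⟨0, by simp only [smul_smul, zero_add, ← pow_add]⟩

theorem cechFrac_add (S : Finset (Fin n)) (m m' : M) (k : ℕ) :
    cechFrac x S m k + cechFrac x S m' k = cechFrac x S (m + m') k := by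
  simp only [cechFrac, LocalizedModule.mk_add_mk, ← smul_add, LocalizedModule.mk_cancel_common_left]

theorem cechFrac_sum (S : Finset (Fin n)) {ι : Type} (s : Finset ι) (m : ι → M) (k : ℕ) :
    cechFrac x S (∑ i ∈ s, m i) k = ∑ i ∈ s, cechFrac x S (m i) k :=
  map_sum (AddMonoidHom.mk' (cechFrac x S · k) fun a b => (cechFrac_add x S a b k).symm) m s

theorem exists_cechFrac_common_denom (S : Finset (Fin n)) (c c' : cechL A x M S) :
    ∃ m m' k, c = cechFrac x S m k ∧ c' = cechFrac x S m' k := by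
  obtain ⟨m, k, rfl⟩ := exists_eq_cechFrac x S c
  obtain ⟨m', l, rfl⟩ := exists_eq_cechFrac x S c'
  exact ⟨(∏ i ∈ S, x i) ^ l • m, (∏ i ∈ S, x i) ^ k • m', k + l,
    (cechFrac_pow_smul ..).symm, by rw [add_comm, cechFrac_pow_smul]⟩

theorem cechFrac_exponent_zero (S : Finset (Fin n)) (m : M) :
    cechFrac x S m 0 = LocalizedModule.mkLinearMap _ M m := by
  simp only [cechFrac, pow_zero]
  rfl

theorem cechMap_cechFrac (S T : Finset (Fin n)) (h : S ⊆ T) (m : M) (k : ℕ) :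
    cechMap A x M S T h (cechFrac x S m k) =
      cechFrac x T ((∏ i ∈ T \ S, x i) ^ k • m) k := by
  have hcancel : cechFrac x T ((∏ i ∈ T, x i) ^ k • m) k = cechFrac x T m 0 := by
    simpa only [zero_add] using cechFrac_pow_smul x T m 0 k
  rw [cechMap, cechFrac, LocalizedModule.lift_mk, Module.End.algebraMap_isUnit_inv_apply_eq_iff,
    smul_cechFrac, smul_smul, ← mul_pow, mul_comm, Finset.prod_sdiff h, hcancel,
    cechFrac_exponent_zero]

theorem cechMap_self (S : Finset (Fin n)) (h : S ⊆ S) (c : cechL A x M S) :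
    cechMap A x M S S h c = c := by
  obtain ⟨m, k, rfl⟩ := exists_eq_cechFrac x S c
  rw [cechMap_cechFrac, Finset.sdiff_self, Finset.prod_empty, one_pow, one_smul]

theorem cechMap_cechMap (S T U : Finset (Fin n)) (h : S ⊆ T) (h' : T ⊆ U) (c : cechL A x M S) :
    cechMap A x M T U h' (cechMap A x M S T h c) = cechMap A x M S U (h.trans h') c := by
  obtain ⟨m, k, rfl⟩ := exists_eq_cechFrac x S c
  have hprod : (∏ i ∈ U \ T, x i) * ∏ i ∈ T \ S, x i = ∏ i ∈ U \ S, x i := by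
    rw [← Finset.prod_sdiff (Finset.sdiff_subset_sdiff h' (subset_refl S)),
      sdiff_sdiff_sdiff_cancel_right h]
  simp only [cechMap_cechFrac, smul_smul, ← mul_pow, hprod]

/-- The map on Čech localizations induced by a linear map. -/
noncomputable def cechLMap (S : Finset (Fin n)) :
    (M →ₗ[A] N) →ₗ[A] cechL A x M S →ₗ[A] cechL A x N S :=
  IsLocalizedModule.map (Submonoid.powers (∏ i ∈ S, x i))
    (LocalizedModule.mkLinearMap _ M) (LocalizedModule.mkLinearMap _ N)

theorem cechLMap_cechFrac (S : Finset (Fin n)) (φ : M →ₗ[A] N) (m : M) (k : ℕ) :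
    cechLMap x S φ (cechFrac x S m k) = cechFrac x S (φ m) k :=
  IsLocalizedModule.map_LocalizedModules _ _ _ _

theorem cechLMap_cechMap (S T : Finset (Fin n)) (h : S ⊆ T) (φ : M →ₗ[A] N) (c : cechL A x M S) :
    cechLMap x T φ (cechMap A x M S T h c) = cechMap A x N S T h (cechLMap x S φ c) := by
  obtain ⟨m, k, rfl⟩ := exists_eq_cechFrac x S c
  simp only [cechMap_cechFrac, cechLMap_cechFrac, map_smul]

/-- The map on Čech cochains induced by a linear map. -/
noncomputable def cechCMap (p : ℕ) : (M →ₗ[A] N) →ₗ[A] cechC A x M p →ₗ[A] cechC A x N p where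
  toFun φ := LinearMap.pi fun T => cechLMap x T.1 φ ∘ₗ LinearMap.proj T
  map_add' φ ψ := by ext; simp
  map_smul' a φ := by ext; simp

theorem cechCMap_apply (p : ℕ) (φ : M →ₗ[A] N) (c : cechC A x M p) (T) :
    cechCMap x p φ c T = cechLMap x T.1 φ (c T) := rfl

theorem cechCMap_comp (p : ℕ) (φ : M →ₗ[A] N) (ψ : N →ₗ[A] P) (c : cechC A x M p) :
    cechCMap x p (ψ ∘ₗ φ) c = cechCMap x p ψ (cechCMap x p φ c) := by
  funext T
  obtain ⟨m, k, h⟩ := exists_eq_cechFrac x T.1 (c T)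
  simp only [cechCMap_apply, h, cechLMap_cechFrac, LinearMap.comp_apply]

theorem cechCMap_id (p : ℕ) (c : cechC A x M p) : cechCMap x p LinearMap.id c = c := by
  funext T
  obtain ⟨m, k, h⟩ := exists_eq_cechFrac x T.1 (c T)
  rw [cechCMap_apply, h, cechLMap_cechFrac, LinearMap.id_apply]

theorem cechCMap_injective (p : ℕ) {φ : M →ₗ[A] N} (hφ : Function.Injective φ) :
    Function.Injective (cechCMap x p φ) := fun _ _ h =>
  funext fun T => IsLocalizedModule.map_injective _ _ _ φ hφ (congrFun h T)

theorem cechCMap_surjective (p : ℕ) {φ : M →ₗ[A] N} (hφ : Function.Surjective φ) :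
    Function.Surjective (cechCMap x p φ) := fun c => by
  choose b hb using fun T : {S : Finset (Fin n) // S.card = p} =>
    IsLocalizedModule.map_surjective (.powers (∏ i ∈ T.1, x i))
      (LocalizedModule.mkLinearMap (.powers (∏ i ∈ T.1, x i)) M)
      (LocalizedModule.mkLinearMap (.powers (∏ i ∈ T.1, x i)) N) φ hφ (c T)
  exact ⟨b, funext hb⟩

theorem cechCMap_exact (p : ℕ) {φ : M →ₗ[A] N} {ψ : N →ₗ[A] P} (h : Function.Exact φ ψ) :
    Function.Exact (cechCMap x p φ) (cechCMap x p ψ) := by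
  have hT (T : {S : Finset (Fin n) // S.card = p}) :=
    IsLocalizedModule.map_exact (.powers (∏ i ∈ T.1, x i))
      (LocalizedModule.mkLinearMap (.powers (∏ i ∈ T.1, x i)) M)
      (LocalizedModule.mkLinearMap (.powers (∏ i ∈ T.1, x i)) N)
      (LocalizedModule.mkLinearMap (.powers (∏ i ∈ T.1, x i)) P) φ ψ h
  intro c
  constructor
  · intro hc
    choose b hb using fun T => (hT T (c T)).mp (congrFun hc T)
    exact ⟨b, funext hb⟩
  · rintro ⟨b, rfl⟩
    exact funext fun T => (hT T _).mpr ⟨b T, rfl⟩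

/-- The sign with which the `j`-th face of `T` enters the Čech differential. -/
def cechSign (A : Type) [CommRing A] {n : ℕ} (j : Fin n) (T : Finset (Fin n)) : A :=
  (-1) ^ (T.filter (· < j)).card

theorem cechSign_mul_self (j : Fin n) (T : Finset (Fin n)) :
    cechSign A j T * cechSign A j T = 1 := by
  rw [cechSign, ← mul_pow, neg_mul_neg, one_mul, one_pow]

theorem cechSign_erase_of_le {i j : Fin n} (T : Finset (Fin n)) (h : j ≤ i) :
    cechSign A j (T.erase i) = cechSign A j T := by
  rw [cechSign, cechSign, Finset.filter_erase, Finset.erase_eq_of_notMem]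
  simp [h]

theorem cechSign_erase_of_lt {i j : Fin n} {T : Finset (Fin n)} (hi : i ∈ T) (h : i < j) :
    cechSign A j (T.erase i) = -cechSign A j T := by
  have hmem : i ∈ T.filter (· < j) := Finset.mem_filter.mpr ⟨hi, h⟩
  rw [cechSign, cechSign, Finset.filter_erase, ← Finset.card_erase_add_one hmem, pow_succ]
  ring

theorem cechSign_mul_cechSign_erase {i j : Fin n} {T : Finset (Fin n)} (hi : i ∈ T) (hj : j ∈ T)
    (hij : i ≠ j) :
    cechSign A j T * cechSign A i (T.erase j) = -(cechSign A i T * cechSign A j (T.erase i)) := by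
  rcases lt_or_gt_of_ne hij with h | h
  · rw [cechSign_erase_of_lt hi h, cechSign_erase_of_le T h.le]
    ring
  · rw [cechSign_erase_of_lt hj h, cechSign_erase_of_le T h.le]
    ring

/-- The value of a cochain at `S`, restricted to `U`. It is `0` unless `S ⊆ U` and `S` has the
right cardinality, so that sums over faces need no dependent indices. -/
noncomputable def cechVal {p : ℕ} (c : cechC A x M p) (U S : Finset (Fin n)) : cechL A x M U :=
  if h : S ⊆ U ∧ S.card = p then cechMap A x M S U h.1 (c ⟨S, h.2⟩) else 0

theorem cechVal_eq {p : ℕ} (c : cechC A x M p) {U S : Finset (Fin n)} (h : S ⊆ U)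
    (hS : S.card = p) : cechVal x c U S = cechMap A x M S U h (c ⟨S, hS⟩) :=
  dif_pos ⟨h, hS⟩

theorem cechVal_self {p : ℕ} (c : cechC A x M p) (T : {S : Finset (Fin n) // S.card = p}) :
    cechVal x c T.1 T.1 = c T := by
  rw [cechVal_eq x c subset_rfl T.2, cechMap_self]

theorem cechMap_cechVal {p : ℕ} (c : cechC A x M p) {S T U : Finset (Fin n)} (h : S ⊆ T)
    (h' : T ⊆ U) : cechMap A x M T U h' (cechVal x c T S) = cechVal x c U S := by
  by_cases hS : S.card = p
  · rw [cechVal_eq x c h hS, cechVal_eq x c (h.trans h') hS, cechMap_cechMap]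
  · rw [cechVal, cechVal, dif_neg (hS ·.2), dif_neg (hS ·.2), map_zero]

theorem cechD_apply (p : ℕ) (c : cechC A x M p) (T) :
    cechD A x M p c T = ∑ j ∈ T.1, cechSign A j T.1 • cechVal x c T.1 (T.1.erase j) := by
  simp only [cechD, LinearMap.pi_apply, LinearMap.sum_apply, LinearMap.smul_apply,
    LinearMap.comp_apply, LinearMap.proj_apply]
  rw [← Finset.sum_attach T.1]
  refine Finset.sum_congr rfl fun j _ => ?_
  rw [cechVal_eq x c (Finset.erase_subset _ _) (by rw [Finset.card_erase_of_mem j.2, T.2]; rfl)]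
  rfl

theorem cechVal_cechD (p : ℕ) (c : cechC A x M p) {T U : Finset (Fin n)} (h : T ⊆ U)
    (hT : T.card = p + 1) :
    cechVal x (cechD A x M p c) U T = ∑ j ∈ T, cechSign A j T • cechVal x c U (T.erase j) := by
  simp only [cechVal_eq x _ h hT, cechD_apply, map_sum, map_smul,
    cechMap_cechVal x c (Finset.erase_subset _ _)]

theorem cechD_cechD (p : ℕ) (c : cechC A x M p) :
    cechD A x M (p + 1) (cechD A x M p c) = 0 := by
  funext T
  have expand : ∀ j ∈ T.1, cechSign A j T.1 • cechVal x (cechD A x M p c) T.1 (T.1.erase j) =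
      ∑ i ∈ T.1.erase j, (cechSign A j T.1 * cechSign A i (T.1.erase j)) •
        cechVal x c T.1 ((T.1.erase j).erase i) := fun j hj => by
    rw [cechVal_cechD x p c (Finset.erase_subset _ _)
      (by rw [Finset.card_erase_of_mem hj, T.2]; rfl), Finset.smul_sum]
    simp only [smul_smul]
  rw [cechD_apply, Finset.sum_congr rfl expand, Finset.sum_sigma']
  -- The faces removing `j` then `i` and `i` then `j` cancel.
  refine Finset.sum_involution (fun a _ => ⟨a.2, a.1⟩) ?_ ?_ ?_ fun _ _ => rfl
  · rintro ⟨j, i⟩ h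
    simp only [Finset.mem_sigma, Finset.mem_erase] at h
    simp only [cechSign_mul_cechSign_erase h.2.2 h.1 h.2.1, Finset.erase_right_comm, neg_smul,
      neg_add_cancel]
  · rintro ⟨j, i⟩ h _ h'
    simp only [Finset.mem_sigma, Finset.mem_erase] at h
    exact h.2.1 (congrArg Sigma.fst h')
  · rintro ⟨j, i⟩ h
    simp only [Finset.mem_sigma, Finset.mem_erase] at h ⊢
    exact ⟨h.2.2, h.2.1.symm, h.1⟩

theorem cechD_cechDprev (p : ℕ) (c : cechC A x M (p - 1)) :
    cechD A x M p (cechDprev A x M p c) = 0 := by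
  cases p with
  | zero => exact map_zero _
  | succ q => exact cechD_cechD x q c

theorem cechLMap_cechVal {p : ℕ} (φ : M →ₗ[A] N) (c : cechC A x M p) (U S : Finset (Fin n)) :
    cechLMap x U φ (cechVal x c U S) = cechVal x (cechCMap x p φ c) U S := by
  unfold cechVal
  split_ifs
  · exact cechLMap_cechMap ..
  · exact map_zero _

theorem cechD_cechCMap (p : ℕ) (φ : M →ₗ[A] N) (c : cechC A x M p) :
    cechD A x N p (cechCMap x p φ c) = cechCMap x (p + 1) φ (cechD A x M p c) := by
  funext T
  simp only [cechCMap_apply, cechD_apply, map_sum, map_smul, cechLMap_cechVal]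

theorem cechDprev_cechCMap (p : ℕ) (φ : M →ₗ[A] N) (c : cechC A x M (p - 1)) :
    cechDprev A x N p (cechCMap x (p - 1) φ c) = cechCMap x p φ (cechDprev A x M p c) := by
  cases p with
  | zero => exact (map_zero _).symm
  | succ q => exact cechD_cechCMap x q φ c

end CechComplex

section Vanishing

variable {A : Type} [CommRing A] {n : ℕ} (x : Fin n → A)
  {M : Type} [AddCommGroup M] [Module A M]
  {N : Type} [AddCommGroup N] [Module A N]
  {P : Type} [AddCommGroup P] [Module A P]

theorem cechIsBoundary_iff (i : ℕ) (c : cechC A x M i) :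
    cechIsBoundary A x M i c ↔ ∃ b, cechDprev A x M i b = c := by
  cases i with
  | zero => exact ⟨fun h => ⟨0, h.symm⟩, fun ⟨_, h⟩ => h.symm⟩
  | succ q => exact Iff.rfl

theorem lcVanish_iff (i : ℕ) :
    lcVanish A x M i ↔
      ∀ c : cechC A x M i, cechD A x M i c = 0 → ∃ b, cechDprev A x M i b = c := by
  simp only [lcVanish, cechIsBoundary_iff]

theorem lcVanish_of_lt (M : Type) [AddCommGroup M] [Module A M] {i : ℕ} (h : n < i) :
    lcVanish A x M i := by
  refine (lcVanish_iff x i).mpr fun z _ => ⟨0, funext fun T => ?_⟩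
  have hcard := Finset.card_le_univ T.1
  rw [T.2, Fintype.card_fin] at hcard
  exact absurd h hcard.not_gt

section ExactSequence

variable {φ : M →ₗ[A] N} {ψ : N →ₗ[A] P} (hφ : Function.Injective φ)
  (hψ : Function.Surjective ψ) (hex : Function.Exact φ ψ)

include hφ hψ hex

theorem exists_cocycle_lift (i : ℕ) (h : lcVanish A x M (i + 1)) (z : cechC A x P i)
    (hz : cechD A x P i z = 0) : ∃ b, cechD A x N i b = 0 ∧ cechCMap x i ψ b = z := by
  obtain ⟨b, rfl⟩ := cechCMap_surjective x _ hψ z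
  rw [cechD_cechCMap] at hz
  obtain ⟨a, ha⟩ := (cechCMap_exact x (i + 1) hex _).mp hz
  have hda : cechD A x M (i + 1) a = 0 := by
    apply cechCMap_injective x _ hφ
    rw [← cechD_cechCMap, ha, cechD_cechD, map_zero]
  obtain ⟨e, he⟩ := h a hda
  refine ⟨b - cechCMap x i φ e, by rw [map_sub, cechD_cechCMap, he, ha, sub_self], ?_⟩
  rw [map_sub, (cechCMap_exact x i hex).apply_apply_eq_zero, sub_zero]

theorem lcVanish_right (i : ℕ) (hN : lcVanish A x N i) (hM : lcVanish A x M (i + 1)) :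
    lcVanish A x P i := by
  refine (lcVanish_iff x i).mpr fun z hz => ?_
  obtain ⟨b, hb, rfl⟩ := exists_cocycle_lift x hφ hψ hex i hM z hz
  obtain ⟨c, rfl⟩ := (lcVanish_iff x i).mp hN b hb
  exact ⟨_, cechDprev_cechCMap x i ψ c⟩

theorem lcVanish_left (i : ℕ) (hN : lcVanish A x N (i + 1)) (hP : lcVanish A x P i) :
    lcVanish A x M (i + 1) := by
  intro z hz
  obtain ⟨b, hb⟩ := hN (cechCMap x _ φ z) (by rw [cechD_cechCMap, hz, map_zero])
  obtain ⟨e, he⟩ := (lcVanish_iff x i).mp hP (cechCMap x i ψ b) (by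
    rw [cechD_cechCMap, hb, (cechCMap_exact x _ hex).apply_apply_eq_zero])
  obtain ⟨e, rfl⟩ := cechCMap_surjective x _ hψ e
  rw [cechDprev_cechCMap] at he
  obtain ⟨a, ha⟩ := (cechCMap_exact x i hex (b - cechDprev A x N i e)).mp
    (by rw [map_sub, he, sub_self])
  refine ⟨a, cechCMap_injective x _ hφ ?_⟩
  rw [← cechD_cechCMap, ha, map_sub, cechD_cechDprev, sub_zero, hb]

theorem lcVanish_middle (i : ℕ) (hM : lcVanish A x M i) (hP : lcVanish A x P i) :
    lcVanish A x N i := by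
  refine (lcVanish_iff x i).mpr fun z hz => ?_
  obtain ⟨e, he⟩ := (lcVanish_iff x i).mp hP (cechCMap x i ψ z) (by
    rw [cechD_cechCMap, hz, map_zero])
  obtain ⟨e, rfl⟩ := cechCMap_surjective x _ hψ e
  rw [cechDprev_cechCMap] at he
  obtain ⟨a, ha⟩ := (cechCMap_exact x i hex (z - cechDprev A x N i e)).mp
    (by rw [map_sub, he, sub_self])
  obtain ⟨c, rfl⟩ := (lcVanish_iff x i).mp hM a (by
    apply cechCMap_injective x _ hφ
    rw [← cechD_cechCMap, ha, map_sub, hz, cechD_cechDprev, sub_zero, map_zero])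
  exact ⟨e + cechCMap x _ φ c, by rw [map_add, cechDprev_cechCMap, ha, add_sub_cancel]⟩

end ExactSequence

theorem lcVanish_pi {ι : Type} [Finite ι] (L : ι → Type) [∀ i, AddCommGroup (L i)]
    [∀ i, Module A (L i)] (p : ℕ) (h : ∀ i, lcVanish A x (L i) p) :
    lcVanish A x (∀ i, L i) p := by
  classical
  have := Fintype.ofFinite ι
  refine (lcVanish_iff x p).mpr fun z hz => ?_
  choose b hb using fun i => (lcVanish_iff x p).mp (h i) (cechCMap x p (LinearMap.proj i) z)
    (by rw [cechD_cechCMap, hz, map_zero])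
  have hid : ∑ i, LinearMap.single A L i ∘ₗ LinearMap.proj i = LinearMap.id := by
    ext m i
    simp
  refine ⟨∑ i, cechCMap x _ (LinearMap.single A L i) (b i), ?_⟩
  simp only [map_sum, cechDprev_cechCMap, hb, ← cechCMap_comp]
  rw [← LinearMap.sum_apply, ← map_sum, hid, cechCMap_id]

end Vanishing

section Torsion

variable {A : Type} [CommRing A] {n : ℕ} (x : Fin n → A)
  {M : Type} [AddCommGroup M] [Module A M]

theorem exists_cechMap_insert_eq_pow_smul {j : Fin n} {S : Finset (Fin n)} (hj : j ∉ S)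
    (u : cechL A x M (insert j S)) :
    ∃ k b, cechMap A x M S (insert j S) (Finset.subset_insert _ _) b = x j ^ k • u := by
  obtain ⟨m, k, rfl⟩ := exists_eq_cechFrac x _ u
  refine ⟨k, cechFrac x S m k, ?_⟩
  rw [cechMap_cechFrac, smul_cechFrac, Finset.insert_sdiff_cancel hj, Finset.prod_singleton]

theorem exists_pow_smul_eq_zero_of_cechMap_insert {j : Fin n} {S : Finset (Fin n)} (hj : j ∉ S)
    (u : cechL A x M S)
    (hu : cechMap A x M S (insert j S) (Finset.subset_insert _ _) u = 0) :
    ∃ k, x j ^ k • u = 0 := by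
  obtain ⟨m, k, rfl⟩ := exists_eq_cechFrac x _ u
  rw [cechMap_cechFrac, cechFrac_eq_zero_iff, Finset.insert_sdiff_cancel hj,
    Finset.prod_singleton, Finset.prod_insert hj] at hu
  obtain ⟨l, hl⟩ := hu
  refine ⟨l + k, ?_⟩
  rw [smul_cechFrac, cechFrac_eq_zero_iff]
  refine ⟨l, ?_⟩
  rw [← hl, smul_smul, smul_smul]
  ring_nf

theorem exists_pow_smul_cechC_eq_zero {p : ℕ} (a : A) (c : cechC A x M p)
    (h : ∀ T, ∃ k, a ^ k • c T = 0) : ∃ k, a ^ k • c = 0 := by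
  choose k hk using h
  refine ⟨Finset.univ.sup k, funext fun T => ?_⟩
  rw [Pi.smul_apply, ← Nat.sub_add_cancel (Finset.le_sup (f := k) (Finset.mem_univ T)), pow_add,
    mul_smul, hk, smul_zero]
  rfl

theorem exists_pow_smul_eq_zero_of_cocycle {p : ℕ} (u : cechC A x M p)
    (hu : cechD A x M p u = 0) (j : Fin n) (h : ∀ T, j ∈ T.1 → u T = 0) :
    ∃ k, x j ^ k • u = 0 := by
  refine exists_pow_smul_cechC_eq_zero x _ _ fun T => ?_
  by_cases hj : j ∈ T.1
  · exact ⟨0, by rw [h T hj, smul_zero]⟩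
  apply exists_pow_smul_eq_zero_of_cechMap_insert x hj
  have hD := congrFun hu ⟨insert j T.1, by rw [Finset.card_insert_of_notMem hj, T.2]⟩
  rw [cechD_apply, Finset.sum_eq_single j, Finset.erase_insert hj,
    cechVal_eq x u (Finset.subset_insert _ _) T.2] at hD
  · simpa only [smul_smul, cechSign_mul_self, one_smul, Pi.zero_apply, smul_zero] using
      congrArg (cechSign A j (insert j T.1) • ·) hD
  · intro a _ haj
    unfold cechVal
    split_ifs with hcard
    · rw [h _ (Finset.mem_erase.mpr ⟨haj.symm, Finset.mem_insert_self _ _⟩), map_zero, smul_zero]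
    · exact smul_zero _
  · exact fun hnot => absurd (Finset.mem_insert_self _ _) hnot

theorem exists_lift_insert_of_cochain {q : ℕ} (z : cechC A x M (q + 1)) (j : Fin n) :
    ∃ K, ∃ b : cechC A x M q, ∀ (S : {S : Finset (Fin n) // S.card = q}) (U : Finset (Fin n))
      (hU : insert j S.1 ⊆ U), j ∉ S.1 →
      cechMap A x M S.1 U ((Finset.subset_insert _ _).trans hU) (b S) =
        x j ^ K • cechVal x z U (insert j S.1) := by
  have hlift (S : {S : Finset (Fin n) // S.card = q}) : ∃ k, ∃ b : cechL A x M S.1, j ∉ S.1 →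
      cechMap A x M S.1 (insert j S.1) (Finset.subset_insert _ _) b =
        x j ^ k • cechVal x z (insert j S.1) (insert j S.1) := by
    by_cases hj : j ∈ S.1
    · exact ⟨0, 0, fun h => absurd hj h⟩
    · obtain ⟨k, b, h⟩ := exists_cechMap_insert_eq_pow_smul x hj
        (cechVal x z (insert j S.1) (insert j S.1))
      exact ⟨k, b, fun _ => h⟩
  choose k b hb using hlift
  refine ⟨Finset.univ.sup k, fun S => x j ^ (Finset.univ.sup k - k S) • b S, fun S U hU hj => ?_⟩
  rw [← cechMap_cechMap x S.1 (insert j S.1) U (Finset.subset_insert _ _) hU, map_smul, hb S hj,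
    smul_smul, ← pow_add, Nat.sub_add_cancel (Finset.le_sup (f := k) (Finset.mem_univ S)),
    map_smul, cechMap_cechVal x z subset_rfl]

theorem exists_cechD_eq_pow_smul_of_mem {q : ℕ} (z : cechC A x M (q + 1)) (j : Fin n) :
    ∃ K, ∃ b : cechC A x M q, ∀ T, j ∈ T.1 → cechD A x M q b T = x j ^ K • z T := by
  obtain ⟨K, b, hb⟩ := exists_lift_insert_of_cochain x z j
  let b' : cechC A x M q := fun S => if j ∈ S.1 then 0 else cechSign A j S.1 • b S
  refine ⟨K, b', fun T hj => ?_⟩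
  have hcard : (T.1.erase j).card = q := by rw [Finset.card_erase_of_mem hj, T.2]; rfl
  rw [cechD_apply, Finset.sum_eq_single_of_mem j hj]
  · have hlift := hb ⟨T.1.erase j, hcard⟩ T.1 (Finset.insert_erase hj).le (Finset.notMem_erase _ _)
    simp only [Finset.insert_erase hj, cechVal_self] at hlift
    simp only [cechVal_eq x b' (Finset.erase_subset _ _) hcard, b', Finset.notMem_erase, if_false,
      map_smul, hlift, smul_smul, cechSign_erase_of_le _ le_rfl]
    rw [← mul_assoc, cechSign_mul_self, one_mul]
  · intro a _ haj
    unfold cechVal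
    split_ifs with h
    · simp only [b', Finset.mem_erase.mpr ⟨haj.symm, hj⟩, if_true, map_zero, smul_zero]
    · exact smul_zero _

theorem exists_cechDprev_eq_pow_smul {p : ℕ} (z : cechC A x M p) (hz : cechD A x M p z = 0)
    (j : Fin n) : ∃ k b, cechDprev A x M p b = x j ^ k • z := by
  cases p with
  | zero =>
    obtain ⟨k, hk⟩ := exists_pow_smul_eq_zero_of_cocycle x z hz j fun T hT =>
      absurd (Finset.card_eq_zero.mp T.2 ▸ hT) (Finset.notMem_empty j)
    exact ⟨k, 0, by rw [hk, map_zero]⟩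
  | succ q =>
    obtain ⟨K, b, hb⟩ := exists_cechD_eq_pow_smul_of_mem x z j
    obtain ⟨l, hl⟩ := exists_pow_smul_eq_zero_of_cocycle x (cechD A x M q b - x j ^ K • z)
      (by rw [map_sub, cechD_cechD, map_smul, hz, smul_zero, sub_zero]) j
      fun T hT => sub_eq_zero.mpr (hb T hT)
    refine ⟨l + K, x j ^ l • b, ?_⟩
    rw [smul_sub, sub_eq_zero, smul_smul, ← pow_add] at hl
    rw [← hl]
    exact map_smul _ _ _

theorem smul_cechC_eq_zero {p : ℕ} {a : A} (ha : a ∈ Module.annihilator A M)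
    (z : cechC A x M p) : a • z = 0 := by
  funext T
  obtain ⟨m, k, h⟩ := exists_eq_cechFrac x T.1 (z T)
  rw [Pi.smul_apply, h, smul_cechFrac, Module.mem_annihilator.mp ha, cechFrac_zero]
  rfl

theorem exists_cechDprev_eq_pow_smul_of_mem_radical {J : Ideal A}
    (hJ : J ≤ Module.annihilator A M) {f : A}
    (hf : f ∈ (Ideal.span (Set.range x) ⊔ J).radical) {p : ℕ} (z : cechC A x M p)
    (hz : cechD A x M p z = 0) : ∃ k b, cechDprev A x M p b = f ^ k • z := by
  let I : Ideal A := (LinearMap.range (cechDprev A x M p)).comap (LinearMap.toSpanSingleton A _ z)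
  have hI : (Ideal.span (Set.range x) ⊔ J).radical ≤ I.radical := by
    refine Ideal.radical_le_radical_iff.mpr (sup_le (Ideal.span_le.mpr ?_) fun a ha => ?_)
    · rintro _ ⟨j, rfl⟩
      obtain ⟨k, b, hb⟩ := exists_cechDprev_eq_pow_smul x z hz j
      exact ⟨k, b, hb⟩
    · exact Ideal.le_radical ⟨0, by
        simp [smul_cechC_eq_zero x (hJ ha)]⟩
  obtain ⟨k, b, hb⟩ := hI hf
  exact ⟨k, b, hb⟩

theorem lcVanish_of_isUnit {J : Ideal A} (hJ : J ≤ Module.annihilator A M) {f : A}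
    (hf : f ∈ (Ideal.span (Set.range x) ⊔ J).radical)
    (hunit : IsUnit (algebraMap A (Module.End A M) f)) (p : ℕ) : lcVanish A x M p := by
  refine (lcVanish_iff x p).mpr fun z hz => ?_
  obtain ⟨k, b, hb⟩ := exists_cechDprev_eq_pow_smul_of_mem_radical x hJ hf z hz
  obtain ⟨g, hg⟩ := (hunit.pow k).exists_right_inv
  have hg' : f ^ k • g = LinearMap.id := by
    rw [← map_pow] at hg
    exact hg
  refine ⟨cechCMap x _ g b, ?_⟩
  rw [cechDprev_cechCMap, hb, map_smul, ← LinearMap.smul_apply, ← map_smul, hg', cechCMap_id]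

end Torsion

section RadicalInvariance

variable {A : Type} [CommRing A] {n n' : ℕ} (x : Fin n → A) (y : Fin n' → A)
  (M : Type) [AddCommGroup M] [Module A M]

/-- The canonical map `M → ∏ⱼ M_{x_j}`; its kernel is the `0`-th local cohomology of `M`. -/
noncomputable def toLocalizationPi : M →ₗ[A] ∀ j, LocalizedModule (Submonoid.powers (x j)) M :=
  LinearMap.pi fun j => LocalizedModule.mkLinearMap (Submonoid.powers (x j)) M

variable {M}

theorem mem_ker_toLocalizationPi {m : M} :
    m ∈ LinearMap.ker (toLocalizationPi x M) ↔ ∀ j, ∃ k, x j ^ k • m = 0 := by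
  rw [LinearMap.mem_ker, funext_iff]
  refine forall_congr' fun j => ?_
  refine (IsLocalizedModule.eq_zero_iff (Submonoid.powers (x j))
    (LocalizedModule.mkLinearMap (Submonoid.powers (x j)) M)).trans ?_
  exact ⟨by rintro ⟨⟨_, k, rfl⟩, h⟩; exact ⟨k, h⟩, fun ⟨k, h⟩ => ⟨⟨_, k, rfl⟩, h⟩⟩

theorem ker_toLocalizationPi_le {J : Ideal A} (hJ : J ≤ Module.annihilator A M)
    (hy : ∀ j, y j ∈ (Ideal.span (Set.range x) ⊔ J).radical) :
    LinearMap.ker (toLocalizationPi x M) ≤ LinearMap.ker (toLocalizationPi y M) := by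
  intro m hm
  rw [mem_ker_toLocalizationPi] at hm ⊢
  have h : (Ideal.span (Set.range x) ⊔ J).radical ≤
      Ideal.radical (LinearMap.ker (LinearMap.toSpanSingleton A M m)) := by
    refine Ideal.radical_le_radical_iff.mpr (sup_le (Ideal.span_le.mpr ?_) fun a ha => ?_)
    · rintro _ ⟨j, rfl⟩
      exact hm j
    · exact Ideal.le_radical (Module.mem_annihilator.mp (hJ ha) m)
  exact fun j => h (hy j)

theorem cechFrac_eq_zero_of_pow_smul {S : Finset (Fin n)} {j : Fin n} (hj : j ∈ S) {m : M}
    {l : ℕ} (h : x j ^ l • m = 0) (k : ℕ) : cechFrac x S m k = 0 := by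
  refine (cechFrac_eq_zero_iff x S m k).mpr ⟨l, ?_⟩
  rw [← Finset.mul_prod_erase _ _ hj, mul_pow, mul_comm, mul_smul, h, smul_zero]

theorem lcVanish_succ_of_torsion (h : ∀ (m : M) (j), ∃ k, x j ^ k • m = 0) (i : ℕ) :
    lcVanish A x M (i + 1) := by
  refine fun z _ => ⟨0, funext fun T => ?_⟩
  obtain ⟨j, hj⟩ : T.1.Nonempty := Finset.card_pos.mp (T.2.symm ▸ i.succ_pos)
  obtain ⟨m, k, hm⟩ := exists_eq_cechFrac x T.1 (z T)
  obtain ⟨l, hl⟩ := h m j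
  rw [map_zero, hm, cechFrac_eq_zero_of_pow_smul x hj hl]
  rfl

theorem lcVanish_zero_iff :
    lcVanish A x M 0 ↔ LinearMap.ker (toLocalizationPi x M) = ⊥ := by
  rw [Submodule.eq_bot_iff]
  refine ⟨fun h m hm => ?_, fun h z hz => funext fun T => ?_⟩
  · rw [mem_ker_toLocalizationPi] at hm
    have hz := h (fun T => cechFrac x T.1 m 0) <| funext fun T => by
      rw [cechD_apply]
      refine Finset.sum_eq_zero fun j hj => ?_
      obtain ⟨l, hl⟩ := hm j
      rw [cechVal_eq x _ (Finset.erase_subset _ _) (by rw [Finset.card_erase_of_mem hj, T.2]),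
        cechMap_cechFrac, pow_zero, one_smul, cechFrac_eq_zero_of_pow_smul x hj hl, smul_zero]
    obtain ⟨j, hj⟩ := (cechFrac_eq_zero_iff x ∅ m 0).mp (congrFun hz ⟨∅, rfl⟩)
    simpa using hj
  · obtain ⟨m, k, hm⟩ := exists_eq_cechFrac x T.1 (z T)
    have hT : T.1 = ∅ := Finset.card_eq_zero.mp T.2
    have hm0 : m = 0 := h m <| (mem_ker_toLocalizationPi x).mpr fun j => by
      obtain ⟨l, b, hb⟩ := exists_cechDprev_eq_pow_smul x z hz j
      have hb := (congrFun hb T).symm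
      rw [Pi.smul_apply, hm, smul_cechFrac] at hb
      obtain ⟨i, hi⟩ := (cechFrac_eq_zero_iff x T.1 _ k).mp hb
      exact ⟨l, by simpa [hT] using hi⟩
    rw [hm, hm0, cechFrac_zero]
    rfl

theorem annihilator_le_annihilator_localizedModule (U : Submonoid A) :
    Module.annihilator A M ≤ Module.annihilator A (LocalizedModule U M) := by
  refine fun a ha => Module.mem_annihilator.mpr fun v => ?_
  induction v using LocalizedModule.induction_on with
  | h m s => rw [LocalizedModule.smul'_mk, Module.mem_annihilator.mp ha, LocalizedModule.zero_mk]

theorem lcVanish_localizationPi {J : Ideal A} (hJ : J ≤ Module.annihilator A M)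
    (hy : ∀ j, y j ∈ (Ideal.span (Set.range x) ⊔ J).radical) (i : ℕ) :
    lcVanish A x (∀ j, LocalizedModule (Submonoid.powers (y j)) M) i :=
  lcVanish_pi x _ i fun j => lcVanish_of_isUnit x
    (hJ.trans (annihilator_le_annihilator_localizedModule _))
    (hy j) (IsLocalizedModule.map_units (LocalizedModule.mkLinearMap (.powers (y j)) M)
      ⟨y j, Submonoid.mem_powers _⟩) i

theorem lcVanish_succ_iff_quotient_range {L : Type} [AddCommGroup L] [Module A L] (f : M →ₗ[A] L)
    (hker : ∀ i, lcVanish A x (LinearMap.ker f) (i + 1)) (hL : ∀ i, lcVanish A x L i) (i : ℕ) :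
    lcVanish A x M (i + 1) ↔ lcVanish A x (L ⧸ LinearMap.range f) i := by
  have hexM : Function.Exact (LinearMap.ker f).subtype f.rangeRestrict :=
    LinearMap.exact_iff.mpr (by rw [LinearMap.ker_rangeRestrict, Submodule.range_subtype])
  have hexL := LinearMap.exact_subtype_mkQ (LinearMap.range f)
  trans lcVanish A x (LinearMap.range f) (i + 1)
  · exact ⟨fun h => lcVanish_right x (Submodule.injective_subtype _) f.surjective_rangeRestrict
        hexM _ h (hker _), lcVanish_middle x (Submodule.injective_subtype _)
        f.surjective_rangeRestrict hexM _ (hker i)⟩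
  · exact ⟨lcVanish_right x (Submodule.injective_subtype _) (Submodule.mkQ_surjective _) hexL i
      (hL i), lcVanish_left x (Submodule.injective_subtype _) (Submodule.mkQ_surjective _) hexL i
      (hL _)⟩

/-- Induct on `i`, shifting degrees along `M → ∏ⱼ M_{y_j}`: the kernel is torsion and the target
is acyclic for both sequences. -/
theorem lcVanish_iff_of_radical {J : Ideal A}
    (hx : ∀ j, x j ∈ (Ideal.span (Set.range y) ⊔ J).radical)
    (hy : ∀ j, y j ∈ (Ideal.span (Set.range x) ⊔ J).radical) (i : ℕ) :
    ∀ (M : Type) [AddCommGroup M] [Module A M], J ≤ Module.annihilator A M →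
      (lcVanish A x M i ↔ lcVanish A y M i) := by
  induction i with
  | zero =>
    intro M _ _ hJ
    rw [lcVanish_zero_iff, lcVanish_zero_iff,
      le_antisymm (ker_toLocalizationPi_le x y hJ hy) (ker_toLocalizationPi_le y x hJ hx)]
  | succ i ih =>
    intro M _ _ hJ
    have hyy (j) : y j ∈ (Ideal.span (Set.range y) ⊔ J).radical :=
      Ideal.le_radical (Ideal.mem_sup_left (Ideal.subset_span ⟨j, rfl⟩))
    have torsion {n : ℕ} (w : Fin n → A)
        (hw : LinearMap.ker (toLocalizationPi y M) ≤ LinearMap.ker (toLocalizationPi w M)) :=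
      lcVanish_succ_of_torsion w (M := LinearMap.ker (toLocalizationPi y M)) fun m j => by
        obtain ⟨k, hk⟩ := (mem_ker_toLocalizationPi w).mp (hw m.2) j
        exact ⟨k, Subtype.ext hk⟩
    rw [lcVanish_succ_iff_quotient_range x (toLocalizationPi y M)
        (torsion x (ker_toLocalizationPi_le y x hJ hx)) (lcVanish_localizationPi x y hJ hy),
      lcVanish_succ_iff_quotient_range y (toLocalizationPi y M) (torsion y le_rfl)
        (lcVanish_localizationPi y y hJ hyy)]
    have hJpi : J ≤ Module.annihilator A (∀ j, LocalizedModule (Submonoid.powers (y j)) M) := by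
      rw [Module.annihilator_pi]
      exact le_iInf fun j => hJ.trans (annihilator_le_annihilator_localizedModule _)
    exact ih _ (hJpi.trans (LinearMap.annihilator_le_of_surjective _ (Submodule.mkQ_surjective _)))

end RadicalInvariance

section GradingProjections

open TensorProduct

variable {R S : Type} [CommRing R] [CommRing S] [Algebra R S]

theorem coe_decompose_smul {𝒜 : ℤ → Submodule R S} {N : Type} [AddCommGroup N] [Module S N]
    (ℳ : ℤ → AddSubgroup N) [DirectSum.Decomposition ℳ]
    [SetLike.GradedSMul 𝒜 ℳ] {f : S} {δ : ℤ} (hf : f ∈ 𝒜 δ) (μ : ℤ) (m : N) :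
    (DirectSum.decompose ℳ (f • m) (μ + δ) : N) = f • (DirectSum.decompose ℳ m μ : N) := by
  classical
  induction m using DirectSum.Decomposition.inductionOn ℳ with
  | zero => simp only [smul_zero, DirectSum.decompose_zero, DirectSum.zero_apply,
      ZeroMemClass.coe_zero]
  | @homogeneous ν m =>
    have h : f • (m : N) ∈ ℳ (ν + δ) := by
      rw [add_comm]
      exact SetLike.GradedSMul.smul_mem hf m.2
    by_cases hμ : ν = μ
    · subst hμ
      rw [DirectSum.decompose_of_mem_same _ h, DirectSum.decompose_of_mem_same _ m.2]
    · rw [DirectSum.decompose_of_mem_ne _ h (hμ <| add_right_cancel ·),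
        DirectSum.decompose_of_mem_ne _ m.2 hμ, smul_zero]
  | add a b ha hb =>
    simp only [smul_add, DirectSum.decompose_add, DirectSum.add_apply, AddSubgroup.coe_add, ha, hb]

/-- A grading of the `S`-module `N` over the grading `𝒜` of the `R`-algebra `S`, recorded by its
projections: `proj μ m` is the component of `m` of degree `μ`. In contrast to a decomposition into
submodules, the projections extend directly to quotients, tensor products and localizations. -/
structure GradingProjections (𝒜 : ℤ → Submodule R S) (N : Type) [AddCommGroup N] [Module R N]
    [Module S N] where
  proj : ℤ → N →ₗ[R] N
  proj_smul : ∀ {δ f}, f ∈ 𝒜 δ → ∀ μ m, proj (μ + δ) (f • m) = f • proj μ m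
  proj_proj : ∀ μ ν m, proj μ (proj ν m) = if μ = ν then proj ν m else 0
  exists_sum_proj : ∀ m, ∃ s : Finset ℤ, ∀ t, s ⊆ t → ∑ μ ∈ t, proj μ m = m

namespace GradingProjections

variable {𝒜 : ℤ → Submodule R S} {N : Type} [AddCommGroup N] [Module R N] [Module S N]
  (G : GradingProjections 𝒜 N)

theorem proj_proj_self (μ : ℤ) (m : N) : G.proj μ (G.proj μ m) = G.proj μ m := by
  rw [G.proj_proj, if_pos rfl]

theorem exists_proj_eq_zero_of_le (m : N) : ∃ a : ℤ, ∀ μ, a ≤ μ → G.proj μ m = 0 := by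
  obtain ⟨s, hs⟩ := G.exists_sum_proj m
  obtain ⟨b, hb⟩ := s.exists_le
  refine ⟨b + 1, fun μ hμ => ?_⟩
  have hmem : μ ∉ s := fun h => (Int.add_one_le_iff.mp hμ).not_ge (hb μ h)
  have hsum := (hs _ (Finset.subset_insert μ s)).trans (hs s subset_rfl).symm
  rwa [Finset.sum_insert hmem, add_eq_right] at hsum

/-- The grading of the quotient by a graded submodule. -/
def quotient [IsScalarTower R S N] (P : Submodule S N) (hP : ∀ μ, ∀ m ∈ P, G.proj μ m ∈ P) :
    GradingProjections 𝒜 (N ⧸ P) where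
  proj μ := (P.restrictScalars R).mapQ (P.restrictScalars R) (G.proj μ) (hP μ)
  proj_smul hf μ m := by
    obtain ⟨m, rfl⟩ := P.mkQ_surjective m
    exact congrArg P.mkQ (G.proj_smul hf μ m)
  proj_proj μ ν m := by
    obtain ⟨m, rfl⟩ := P.mkQ_surjective m
    refine (congrArg P.mkQ (G.proj_proj μ ν m)).trans ?_
    split_ifs <;> rfl
  exists_sum_proj m := by
    obtain ⟨m, rfl⟩ := P.mkQ_surjective m
    obtain ⟨s, hs⟩ := G.exists_sum_proj m
    exact ⟨s, fun t ht => (map_sum P.mkQ _ _).symm.trans (congrArg P.mkQ (hs t ht))⟩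

/-- The grading of `N ⊗[R] k` with `k` in degree `0`. -/
def tensor [IsScalarTower R S N] (k : Type) [AddCommGroup k] [Module R k] :
    GradingProjections 𝒜 (N ⊗[R] k) where
  proj μ := (G.proj μ).rTensor k
  proj_smul hf μ z := by
    induction z using TensorProduct.induction_on with
    | zero => simp only [smul_zero, map_zero]
    | tmul m c => simp only [TensorProduct.smul_tmul', LinearMap.rTensor_tmul, G.proj_smul hf]
    | add z z' h h' => simp only [smul_add, map_add, h, h']
  proj_proj μ ν z := by
    rw [← LinearMap.comp_apply, ← LinearMap.rTensor_comp]
    split_ifs with h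
    · exact congrArg (fun φ => LinearMap.rTensor k φ z)
        (LinearMap.ext fun m => by rw [LinearMap.comp_apply, G.proj_proj, if_pos h])
    · rw [show G.proj μ ∘ₗ G.proj ν = 0 from
        LinearMap.ext fun m => by rw [LinearMap.comp_apply, G.proj_proj, if_neg h]; rfl,
        LinearMap.rTensor_zero, LinearMap.zero_apply]
  exists_sum_proj z := by
    classical
    induction z using TensorProduct.induction_on with
    | zero => exact ⟨∅, fun t _ => by simp only [map_zero, Finset.sum_const_zero]⟩
    | tmul m c =>
      obtain ⟨s, hs⟩ := G.exists_sum_proj m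
      refine ⟨s, fun t ht => ?_⟩
      simp only [LinearMap.rTensor_tmul]
      rw [← TensorProduct.sum_tmul, hs t ht]
    | add z z' h h' =>
      obtain ⟨s, hs⟩ := h
      obtain ⟨s', hs'⟩ := h'
      refine ⟨s ∪ s', fun t ht => ?_⟩
      simp only [map_add, Finset.sum_add_distrib]
      rw [hs t (Finset.union_subset_left ht), hs' t (Finset.union_subset_right ht)]

/-- The componentwise grading of a finite product. -/
def pi {ι : Type} [Finite ι] {L : ι → Type} [∀ i, AddCommGroup (L i)] [∀ i, Module R (L i)]
    [∀ i, Module S (L i)] (G : ∀ i, GradingProjections 𝒜 (L i)) :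
    GradingProjections 𝒜 (∀ i, L i) where
  proj μ := LinearMap.pi fun i => (G i).proj μ ∘ₗ LinearMap.proj i
  proj_smul hf μ v := funext fun i => (G i).proj_smul hf μ (v i)
  proj_proj μ ν v := funext fun i => ((G i).proj_proj μ ν (v i)).trans (by split_ifs <;> rfl)
  exists_sum_proj v := by
    classical
    have := Fintype.ofFinite ι
    choose s hs using fun i => (G i).exists_sum_proj (v i)
    refine ⟨Finset.univ.biUnion s, fun t ht => funext fun i => ?_⟩
    rw [Finset.sum_apply]
    exact hs i t ((Finset.subset_biUnion_of_mem s (Finset.mem_univ i)).trans ht)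

/-- The projections of a decomposition into graded pieces. -/
def ofDecomposition [SetLike.GradedOne 𝒜] [IsScalarTower R S N] (ℳ : ℤ → AddSubgroup N)
    [DirectSum.Decomposition ℳ] [SetLike.GradedSMul 𝒜 ℳ] : GradingProjections 𝒜 N where
  proj μ :=
    { toFun := fun m => DirectSum.decompose ℳ m μ
      map_add' := fun a b => by
        rw [DirectSum.decompose_add, DirectSum.add_apply, AddSubgroup.coe_add]
      map_smul' := fun r m => by
        have h := coe_decompose_smul ℳ (SetLike.algebraMap_mem_graded 𝒜 r) μ m
        rwa [algebraMap_smul, algebraMap_smul, add_zero] at h }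
  proj_smul hf μ m := coe_decompose_smul ℳ hf μ m
  proj_proj μ ν m := by
    classical
    change (DirectSum.decompose ℳ (DirectSum.decompose ℳ m ν : N) μ : N) = ite _ _ _
    rw [DirectSum.decompose_coe, DirectSum.coe_of_apply]
    simp only [eq_comm]
    split_ifs <;> rfl
  exists_sum_proj m := by
    classical
    refine ⟨_, fun t ht => (Finset.sum_subset ht fun μ _ hμ => ?_).symm.trans
      (DirectSum.sum_support_decompose ℳ m)⟩
    have h : DirectSum.decompose ℳ m μ = 0 := DFinsupp.notMem_support_iff.mp hμ
    exact congrArg Subtype.val h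

theorem mem_iff_ofDecomposition_proj_eq [SetLike.GradedOne 𝒜] [IsScalarTower R S N]
    (ℳ : ℤ → AddSubgroup N) [DirectSum.Decomposition ℳ] [SetLike.GradedSMul 𝒜 ℳ] (μ : ℤ)
    (m : N) : m ∈ ℳ μ ↔ (ofDecomposition (𝒜 := 𝒜) ℳ).proj μ m = m :=
  ⟨fun h => DirectSum.decompose_of_mem_same _ h, fun h => h ▸ (DirectSum.decompose ℳ m μ).2⟩

theorem mem_closure_tmul_iff [IsScalarTower R S N] {ℳ : ℤ → AddSubgroup N}
    (hℳ : ∀ μ m, m ∈ ℳ μ ↔ G.proj μ m = m) (k : Type) [AddCommGroup k] [Module R k] (μ : ℤ)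
    (z : N ⊗[R] k) :
    z ∈ AddSubgroup.closure {z : N ⊗[R] k | ∃ m ∈ ℳ μ, ∃ c, z = m ⊗ₜ[R] c} ↔
      (G.tensor k).proj μ z = z := by
  refine ⟨fun h => ?_, fun h => h ▸ ?_⟩
  · induction h using AddSubgroup.closure_induction with
    | mem z hz =>
      obtain ⟨m, hm, c, rfl⟩ := hz
      exact congrArg (· ⊗ₜ[R] c) ((hℳ μ m).mp hm)
    | zero => exact map_zero _
    | add a b _ _ ha hb => rw [map_add, ha, hb]
    | neg a _ ha => rw [map_neg, ha]
  · clear h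
    induction z using TensorProduct.induction_on with
    | zero => rw [map_zero]; exact AddSubgroup.zero_mem _
    | tmul m c =>
      exact AddSubgroup.subset_closure ⟨_, (hℳ μ _).mpr (G.proj_proj_self μ m), c, rfl⟩
    | add a b ha hb => rw [map_add]; exact AddSubgroup.add_mem _ ha hb

section Cech

variable [SetLike.GradedMonoid 𝒜] {n : ℕ} {x : Fin n → S} {w : Fin n → ℤ}

theorem prod_pow_mem (hx : ∀ i, x i ∈ 𝒜 (w i)) (T : Finset (Fin n)) (k : ℕ) :
    (∏ i ∈ T, x i) ^ k ∈ 𝒜 (k * ∑ i ∈ T, w i) := by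
  rw [← nsmul_eq_mul]
  exact SetLike.pow_mem_graded k (SetLike.prod_mem_graded _ _ _ fun i _ => hx i)

theorem cechFrac_proj_congr (hx : ∀ i, x i ∈ 𝒜 (w i)) (μ : ℤ) (T : Finset (Fin n)) {m m' : N}
    {k l : ℕ} (h : cechFrac x T m k = cechFrac x T m' l) :
    cechFrac x T (G.proj (μ + k * ∑ i ∈ T, w i) m) k =
      cechFrac x T (G.proj (μ + l * ∑ i ∈ T, w i) m') l := by
  rw [cechFrac_eq_cechFrac_iff] at h ⊢
  obtain ⟨j, hj⟩ := h
  refine ⟨j, ?_⟩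
  rw [← G.proj_smul (prod_pow_mem hx T (j + l)), ← G.proj_smul (prod_pow_mem hx T (j + k)), hj]
  congr 2
  push_cast
  ring

/-- The component of degree `μ` of an element of a Čech localization: a fraction `m / f ^ k` is
sent to `m' / f ^ k` for the component `m'` of `m` of degree `μ + k deg f`. -/
noncomputable def cechLProj (w : Fin n → ℤ) (T : Finset (Fin n)) (μ : ℤ) (c : cechL S x N T) :
    cechL S x N T :=
  cechFrac x T (G.proj (μ + (exists_eq_cechFrac x T c).choose_spec.choose * ∑ i ∈ T, w i)
    (exists_eq_cechFrac x T c).choose) (exists_eq_cechFrac x T c).choose_spec.choose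

theorem cechLProj_cechFrac (hx : ∀ i, x i ∈ 𝒜 (w i)) (T : Finset (Fin n)) (μ : ℤ) (m : N) (k : ℕ) :
    G.cechLProj w T μ (cechFrac x T m k) = cechFrac x T (G.proj (μ + k * ∑ i ∈ T, w i) m) k :=
  G.cechFrac_proj_congr hx μ T
    (exists_eq_cechFrac x T (cechFrac x T m k)).choose_spec.choose_spec.symm

theorem cechLProj_smul (hx : ∀ i, x i ∈ 𝒜 (w i)) (T : Finset (Fin n)) {f : S} {δ : ℤ}
    (hf : f ∈ 𝒜 δ) (μ : ℤ) (c : cechL S x N T) :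
    G.cechLProj w T (μ + δ) (f • c) = f • G.cechLProj w T μ c := by
  obtain ⟨m, k, rfl⟩ := exists_eq_cechFrac x T c
  rw [smul_cechFrac, G.cechLProj_cechFrac hx, G.cechLProj_cechFrac hx, smul_cechFrac,
    ← G.proj_smul hf, add_right_comm]

variable [IsScalarTower R S N]

/-- The grading of the Čech localizations. -/
noncomputable def cechL (hx : ∀ i, x i ∈ 𝒜 (w i)) (T : Finset (Fin n)) :
    GradingProjections 𝒜 (cechL S x N T) where
  proj μ :=
    { toFun := G.cechLProj w T μ
      map_add' := fun c c' => by
        obtain ⟨m, m', k, rfl, rfl⟩ := exists_cechFrac_common_denom x T c c'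
        simp only [cechFrac_add, G.cechLProj_cechFrac hx, map_add]
      map_smul' := fun r c => by
        have h := G.cechLProj_smul hx T (SetLike.algebraMap_mem_graded 𝒜 r) μ c
        rwa [algebraMap_smul, algebraMap_smul, add_zero] at h }
  proj_smul hf μ c := G.cechLProj_smul hx T hf μ c
  proj_proj μ ν c := by
    obtain ⟨m, k, rfl⟩ := exists_eq_cechFrac x T c
    simp only [LinearMap.coe_mk, AddHom.coe_mk, G.cechLProj_cechFrac hx, G.proj_proj,
      add_left_inj]
    split_ifs
    · rfl
    · exact cechFrac_zero x T k
  exists_sum_proj c := by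
    obtain ⟨m, k, rfl⟩ := exists_eq_cechFrac x T c
    obtain ⟨s, hs⟩ := G.exists_sum_proj m
    refine ⟨s.map (addRightEmbedding (-(k * ∑ i ∈ T, w i))), fun t ht => ?_⟩
    simp only [LinearMap.coe_mk, AddHom.coe_mk, G.cechLProj_cechFrac hx]
    rw [← cechFrac_sum]
    refine congrArg (cechFrac x T · k) ((Finset.sum_map t (addRightEmbedding (k * ∑ i ∈ T, w i))
      fun μ => G.proj μ m).symm.trans (hs _ fun μ hμ => ?_))
    refine Finset.mem_map.mpr ⟨μ - k * ∑ i ∈ T, w i, ht ?_, sub_add_cancel _ _⟩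
    exact Finset.mem_map.mpr ⟨μ, hμ, (sub_eq_add_neg _ _).symm⟩

variable (hx : ∀ i, x i ∈ 𝒜 (w i))

theorem cechL_proj_cechFrac (T : Finset (Fin n)) (μ : ℤ) (m : N) (k : ℕ) :
    (G.cechL hx T).proj μ (cechFrac x T m k) =
      cechFrac x T (G.proj (μ + k * ∑ i ∈ T, w i) m) k :=
  G.cechLProj_cechFrac hx T μ m k

theorem mem_cechGrade_iff {ℳ : ℤ → AddSubgroup N} (hℳ : ∀ μ m, m ∈ ℳ μ ↔ G.proj μ m = m) (μ : ℤ)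
    (T : Finset (Fin n)) (c : _root_.cechL S x N T) :
    c ∈ cechGrade S x N ℳ w μ T ↔ (G.cechL hx T).proj μ c = c := by
  refine ⟨fun h => ?_, fun h => h ▸ ?_⟩
  · induction h using AddSubgroup.closure_induction with
    | mem c hc =>
      obtain ⟨m, k, hm, rfl⟩ := hc
      exact (G.cechL_proj_cechFrac hx T μ m k).trans (congrArg (cechFrac x T · k) ((hℳ _ m).mp hm))
    | zero => exact map_zero _
    | add a b _ _ ha hb => rw [map_add, ha, hb]
    | neg a _ ha => rw [map_neg, ha]
  · obtain ⟨m, k, rfl⟩ := exists_eq_cechFrac x T c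
    rw [cechL_proj_cechFrac]
    exact AddSubgroup.subset_closure ⟨_, k, (hℳ _ _).mpr (G.proj_proj_self _ m), rfl⟩

theorem cechMap_proj {T U : Finset (Fin n)} (h : T ⊆ U) (μ : ℤ) (c : _root_.cechL S x N T) :
    cechMap S x N T U h ((G.cechL hx T).proj μ c) =
      (G.cechL hx U).proj μ (cechMap S x N T U h c) := by
  obtain ⟨m, k, rfl⟩ := exists_eq_cechFrac x T c
  rw [cechL_proj_cechFrac, cechMap_cechFrac, cechMap_cechFrac, cechL_proj_cechFrac,
    ← G.proj_smul (prod_pow_mem hx (U \ T) k), add_assoc, ← mul_add, add_comm (∑ i ∈ T, w i),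
    Finset.sum_sdiff h]

/-- The grading of the Čech cochains. -/
noncomputable def cochains (i : ℕ) : GradingProjections 𝒜 (cechC S x N i) :=
  pi fun T => G.cechL hx T.1

theorem cechVal_proj (i : ℕ) (μ : ℤ) (c : cechC S x N i) (T U : Finset (Fin n)) :
    cechVal x ((G.cochains hx i).proj μ c) T U = (G.cechL hx T).proj μ (cechVal x c T U) := by
  unfold cechVal
  split_ifs with h
  · exact G.cechMap_proj hx _ μ _
  · exact (map_zero _).symm

theorem cechD_proj (i : ℕ) (μ : ℤ) (c : cechC S x N i) :
    cechD S x N i ((G.cochains hx i).proj μ c) =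
      (G.cochains hx (i + 1)).proj μ (cechD S x N i c) := by
  funext T
  change _ = (G.cechL hx T.1).proj μ (cechD S x N i c T)
  rw [cechD_apply, cechD_apply, map_sum]
  refine Finset.sum_congr rfl fun j _ => ?_
  rw [cechVal_proj, cechSign]
  rcases neg_one_pow_eq_or S ({a ∈ T.1 | a < j} : Finset (Fin n)).card with h | h
  · rw [h, one_smul, one_smul]
  · rw [h, neg_one_smul, neg_one_smul, map_neg]

theorem cechDprev_proj (i : ℕ) (μ : ℤ) (c : cechC S x N (i - 1)) :
    cechDprev S x N i ((G.cochains hx (i - 1)).proj μ c) =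
      (G.cochains hx i).proj μ (cechDprev S x N i c) := by
  cases i with
  | zero => exact (map_zero _).symm
  | succ q => exact G.cechD_proj hx q μ c

variable {N' : Type} [AddCommGroup N'] [Module R N'] [Module S N'] [IsScalarTower R S N']
  (G' : GradingProjections 𝒜 N')

theorem cechCMap_proj {φ : N →ₗ[S] N'} (hφ : ∀ μ m, φ (G.proj μ m) = G'.proj μ (φ m))
    (i : ℕ) (μ : ℤ) (c : cechC S x N i) :
    cechCMap x i φ ((G.cochains hx i).proj μ c) =
      (G'.cochains hx i).proj μ (cechCMap x i φ c) := by
  funext T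
  change cechLMap x T.1 φ ((G.cechL hx T.1).proj μ (c T)) =
    (G'.cechL hx T.1).proj μ (cechLMap x T.1 φ (c T))
  obtain ⟨m, k, hc⟩ := exists_eq_cechFrac x T.1 (c T)
  rw [hc, cechL_proj_cechFrac, cechLMap_cechFrac, cechLMap_cechFrac, cechL_proj_cechFrac, hφ]

end Cech

end GradingProjections

end GradingProjections

section Boundaries

variable {A : Type} [CommRing A] {n : ℕ} (x : Fin n → A) {N : Type} [AddCommGroup N] [Module A N]

theorem cechCMap_lsmul (p : ℕ) (f : A) (c : cechC A x N p) :
    cechCMap x p (LinearMap.lsmul A N f) c = f • c := by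
  rw [show LinearMap.lsmul A N f = f • LinearMap.id from rfl, map_smul, LinearMap.smul_apply,
    cechCMap_id]

theorem mem_annihilator_ker_lsmul (f : A) :
    f ∈ Module.annihilator A (LinearMap.ker (LinearMap.lsmul A N f)) :=
  Module.mem_annihilator.mpr fun m => Subtype.ext m.2

theorem mem_annihilator_quotient_range_lsmul (f : A) :
    f ∈ Module.annihilator A (N ⧸ LinearMap.range (LinearMap.lsmul A N f)) := by
  refine Module.mem_annihilator.mpr fun m => ?_
  obtain ⟨m, rfl⟩ := Submodule.mkQ_surjective _ m
  exact (Submodule.Quotient.mk_eq_zero _).mpr ⟨m, rfl⟩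

/- If `b` bounds `f • c`, then the class of `b` in the cohomology of `N ⧸ f N` is a preimage of the
class of `c` under the connecting map, up to the cohomology of the kernel of `f`. -/
theorem mem_range_cechD_of_smul_eq {d : ℕ} {f : A}
    (hK : lcVanish A x (LinearMap.ker (LinearMap.lsmul A N f)) (d + 1)) {c : cechC A x N (d + 1)}
    (hc : cechD A x N (d + 1) c = 0) {b : cechC A x N d} (hb : cechD A x N d b = f • c)
    (hbound : cechCMap x d (LinearMap.range (LinearMap.lsmul A N f)).mkQ b ∈
      LinearMap.range (cechDprev A x _ d)) : c ∈ LinearMap.range (cechD A x N d) := by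
  set L := LinearMap.lsmul A N f
  obtain ⟨e, he⟩ := hbound
  obtain ⟨e, rfl⟩ := cechCMap_surjective x _ (LinearMap.range L).mkQ_surjective e
  rw [cechDprev_cechCMap] at he
  obtain ⟨g, hg⟩ := (cechCMap_exact x d (LinearMap.exact_map_mkQ_range L)
    (b - cechDprev A x N d e)).mp (by rw [map_sub, he, sub_self])
  rw [cechCMap_lsmul] at hg
  have hfc : f • (c - cechD A x N d g) = 0 := by
    rw [smul_sub, ← map_smul, hg, map_sub, cechD_cechDprev, sub_zero, hb, sub_self]
  obtain ⟨a, ha⟩ := (cechCMap_exact x (d + 1) (LinearMap.exact_subtype_ker_map L)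
    (c - cechD A x N d g)).mp ((cechCMap_lsmul x _ f _).trans hfc)
  obtain ⟨h, rfl⟩ : ∃ h, cechD A x (LinearMap.ker L) d h = a :=
    (lcVanish_iff x (d + 1)).mp hK a <|
      cechCMap_injective x _ (LinearMap.ker L).injective_subtype <| by
        rw [← cechD_cechCMap, ha, map_sub, hc, cechD_cechD, sub_zero, map_zero]
  rw [← cechD_cechCMap] at ha
  exact ⟨cechCMap x d (LinearMap.ker L).subtype h + g, by rw [map_add, ha, sub_add_cancel]⟩

theorem exists_eq_cechFrac_zero (c : cechC A x N 0) : ∃ m, ∀ T, c T = cechFrac x T.1 m 0 := by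
  obtain ⟨m, k, hm⟩ := exists_eq_cechFrac x ∅ (c ⟨∅, rfl⟩)
  refine ⟨m, fun ⟨T, hT⟩ => ?_⟩
  obtain rfl := Finset.card_eq_zero.mp hT
  have h := cechFrac_pow_smul x ∅ m 0 k
  rw [Finset.prod_empty, one_pow, one_smul, zero_add] at h
  exact hm.trans h

end Boundaries

section Finiteness

variable {R S : Type} [CommRing R] [CommRing S] [Algebra R S] {n : ℕ} {x : Fin n → S}
  {N : Type} [AddCommGroup N] [Module R N] [Module S N]

theorem GradingProjections.exists_proj_eq_zero_of_finite {𝒜 : ℤ → Submodule R S}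
    (G : GradingProjections 𝒜 N) [Module.Finite R N] :
    ∃ a : ℤ, ∀ μ, a ≤ μ → ∀ m, G.proj μ m = 0 := by
  obtain ⟨s, hs⟩ := Module.finite_def.mp ‹Module.Finite R N›
  choose a ha using G.exists_proj_eq_zero_of_le
  obtain ⟨b, hb⟩ := (s.image a).exists_le
  refine ⟨b, fun μ hμ m => ?_⟩
  have h : Submodule.span R s ≤ LinearMap.ker (G.proj μ) := Submodule.span_le.mpr fun m hm =>
    ha m μ ((hb _ (Finset.mem_image_of_mem a hm)).trans hμ)
  exact h (hs ▸ Submodule.mem_top)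

variable [IsScalarTower R S N]

theorem finite_of_mem_radical_annihilator (hgen : Algebra.adjoin R (Set.range x) = ⊤)
    [Module.Finite S N] (hx : ∀ j, x j ∈ (Module.annihilator S N).radical) :
    Module.Finite R N := by
  let Q := S ⧸ Module.annihilator S N
  have htop : Algebra.adjoin R (Set.range fun j => (Ideal.Quotient.mk _ (x j) : Q)) = ⊤ := by
    have h := AlgHom.map_adjoin (Ideal.Quotient.mkₐ R (Module.annihilator S N)) (Set.range x)
    rw [hgen, ← Set.range_comp, Algebra.map_top, (AlgHom.range_eq_top _).mpr
      (Ideal.Quotient.mkₐ_surjective R _)] at h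
    exact h.symm
  have hfin := fg_adjoin_of_finite (R := R) (Set.finite_range fun j =>
    (Ideal.Quotient.mk _ (x j) : Q)) <| by
      rintro _ ⟨j, rfl⟩
      obtain ⟨k, hk⟩ := hx j
      refine IsIntegral.of_pow k.succ_pos ?_
      rw [pow_succ, ← map_pow, Ideal.Quotient.eq_zero_iff_mem.mpr hk, zero_mul]
      exact isIntegral_zero
  rw [htop, Algebra.top_toSubmodule] at hfin
  have : Module.Finite R Q := ⟨hfin⟩
  let := Module.quotientAnnihilator (R := S) (M := N)
  have : IsScalarTower S Q N := (Module.isTorsionBySet_annihilator S N).isScalarTower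
  have : IsScalarTower R Q N := (Module.isTorsionBySet_annihilator S N).isScalarTower
  have : Module.Finite Q N := Module.Finite.of_restrictScalars_finite S Q N
  exact Module.Finite.trans Q N

theorem finite_cechC_zero [Module.Finite R N] : Module.Finite R (cechC S x N 0) :=
  Module.Finite.of_surjective
    ((LinearMap.pi fun T => LocalizedModule.mkLinearMap (.powers (∏ i ∈ T.1, x i)) N :
      N →ₗ[S] cechC S x N 0).restrictScalars R) fun c => by
    obtain ⟨m, hm⟩ := exists_eq_cechFrac_zero x c
    exact ⟨m, funext fun T => (cechFrac_exponent_zero x T.1 m).symm.trans (hm T).symm⟩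

theorem fg_range_of_ker_le {P X Y : Type} [AddCommGroup P] [Module R P] [AddCommGroup X]
    [Module R X] [AddCommGroup Y] [Module R Y] {φ : P →ₗ[R] X} {ψ : P →ₗ[R] Y}
    (h : LinearMap.ker φ ≤ LinearMap.ker ψ) (hφ : (LinearMap.range φ).FG) :
    (LinearMap.range ψ).FG := by
  have : Module.Finite R (LinearMap.range φ) := Module.Finite.iff_fg.mpr hφ
  have : Module.Finite R (P ⧸ LinearMap.ker φ) := Module.Finite.equiv φ.quotKerEquivRange.symm
  rw [← (LinearMap.ker φ).range_liftQ ψ h]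
  exact Module.Finite.iff_fg.mp (Module.Finite.range _)

namespace GradingProjections

variable {𝒜 : ℤ → Submodule R S} {w : Fin n → ℤ} (G : GradingProjections 𝒜 N)

variable [SetLike.GradedMonoid 𝒜] (hx : ∀ i, x i ∈ 𝒜 (w i))

/-- The homogeneous Čech cocycles of degree `μ`. -/
noncomputable def cocycles (i : ℕ) (μ : ℤ) : Submodule R (cechC S x N i) :=
  LinearMap.ker ((cechD S x N i).restrictScalars R) ⊓
    LinearMap.eqLocus ((G.cochains hx i).proj μ) LinearMap.id

/-- The homogeneous component of degree `μ` of the `i`-th Čech cohomology, as a submodule of the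
cochains modulo boundaries. -/
noncomputable def lcGrade (i : ℕ) (μ : ℤ) :
    Submodule R (cechC S x N i ⧸ LinearMap.range (cechDprev S x N i)) :=
  (G.cocycles hx i μ).map ((LinearMap.range (cechDprev S x N i)).mkQ.restrictScalars R)

theorem lcGrade_eq_bot_iff (i : ℕ) (μ : ℤ) :
    G.lcGrade hx i μ = ⊥ ↔ ∀ c ∈ G.cocycles hx i μ, c ∈ LinearMap.range (cechDprev S x N i) := by
  rw [lcGrade, eq_bot_iff, Submodule.map_le_iff_le_comap]
  exact forall₂_congr fun c _ => Submodule.Quotient.mk_eq_zero _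

theorem smul_mem_cocycles {f : S} {δ : ℤ} (hf : f ∈ 𝒜 δ) {i : ℕ} {μ : ℤ} {c : cechC S x N i}
    (hc : c ∈ G.cocycles hx i μ) : f • c ∈ G.cocycles hx i (μ + δ) :=
  ⟨((cechD S x N i).map_smul f c).trans ((congrArg (f • ·) hc.1).trans (smul_zero f)),
    ((G.cochains hx i).proj_smul hf μ c).trans (congrArg (f • ·) hc.2)⟩

/-- The grading of `N ⧸ f N` for a homogeneous element `f`. -/
def quotientSMul {f : S} {δ : ℤ} (hf : f ∈ 𝒜 δ) :
    GradingProjections 𝒜 (N ⧸ LinearMap.range (LinearMap.lsmul S N f)) :=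
  G.quotient _ <| by
    rintro μ _ ⟨m, rfl⟩
    refine ⟨G.proj (μ - δ) m, ?_⟩
    rw [LinearMap.lsmul_apply, LinearMap.lsmul_apply, ← G.proj_smul hf, sub_add_cancel]

section Step

variable {f : S} {δ : ℤ} (hf : f ∈ 𝒜 δ) {d : ℕ} {μ : ℤ}

include hf in
theorem exists_proj_eq_self_cechD_eq_smul {c : cechC S x N (d + 1)}
    (hc : c ∈ G.cocycles hx (d + 1) μ) (h : f • c ∈ LinearMap.range (cechD S x N d)) :
    ∃ b, (G.cochains hx d).proj (μ + δ) b = b ∧ cechD S x N d b = f • c := by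
  obtain ⟨b, hb⟩ := h
  refine ⟨(G.cochains hx d).proj (μ + δ) b, proj_proj_self _ _ _, ?_⟩
  rw [cechD_proj, hb, (G.cochains hx (d + 1)).proj_smul hf]
  exact congrArg (f • ·) hc.2

theorem cechCMap_mkQ_mem_cocycles {c : cechC S x N (d + 1)} {b : cechC S x N d}
    (hb : (G.cochains hx d).proj (μ + δ) b = b) (hbc : cechD S x N d b = f • c) :
    cechCMap x d (LinearMap.range (LinearMap.lsmul S N f)).mkQ b ∈
      (G.quotientSMul hf).cocycles hx d (μ + δ) := by
  refine ⟨?_, ?_⟩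
  · change cechD S x _ d _ = 0
    rw [cechD_cechCMap, hbc, map_smul]
    exact smul_cechC_eq_zero x (mem_annihilator_quotient_range_lsmul f) _
  · exact (G.cechCMap_proj hx (G.quotientSMul hf) (fun _ _ => rfl) d _ b).symm.trans
      (congrArg _ hb)

variable (hK : lcVanish S x (LinearMap.ker (LinearMap.lsmul S N f)) (d + 1))

include hK in
theorem mem_range_cechD_of_smul_mem (hbot : (G.quotientSMul hf).lcGrade hx d (μ + δ) = ⊥)
    {c : cechC S x N (d + 1)} (hc : c ∈ G.cocycles hx (d + 1) μ)
    (h : f • c ∈ LinearMap.range (cechD S x N d)) : c ∈ LinearMap.range (cechD S x N d) := by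
  obtain ⟨b, hb, hbc⟩ := G.exists_proj_eq_self_cechD_eq_smul hx hf hc h
  exact mem_range_cechD_of_smul_eq x hK hc.1 hbc
    ((lcGrade_eq_bot_iff _ hx d _).mp hbot _ (G.cechCMap_mkQ_mem_cocycles hx hf hb hbc))

/-- The pairs of a cocycle `c` of degree `μ` and a homogeneous cochain bounding `f • c`. -/
noncomputable def boundedSMul (f : S) (δ : ℤ) (d : ℕ) (μ : ℤ) :
    Submodule R (cechC S x N (d + 1) × cechC S x N d) :=
  (G.cocycles hx (d + 1) μ).comap (LinearMap.fst R _ _) ⊓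
    (LinearMap.eqLocus ((G.cochains hx d).proj (μ + δ)) LinearMap.id).comap (LinearMap.snd R _ _) ⊓
    LinearMap.eqLocus ((cechD S x N d).restrictScalars R ∘ₗ LinearMap.snd R _ _)
      ((LinearMap.lsmul S (cechC S x N (d + 1)) f).restrictScalars R ∘ₗ LinearMap.fst R _ _)

include hK in
theorem fg_lcGrade_inf_ker_smul [IsNoetherianRing R]
    (hfg : ((G.quotientSMul hf).lcGrade hx d (μ + δ)).FG) :
    (G.lcGrade hx (d + 1) μ ⊓ LinearMap.ker ((LinearMap.lsmul S
      (cechC S x N (d + 1) ⧸ LinearMap.range (cechD S x N d)) f).restrictScalars R)).FG := by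
  let P := G.boundedSMul hx f δ d μ
  let φ := (LinearMap.range (cechDprev S x _ d)).mkQ.restrictScalars R ∘ₗ
    (cechCMap x d (LinearMap.range (LinearMap.lsmul S N f)).mkQ).restrictScalars R ∘ₗ
      LinearMap.snd R (cechC S x N (d + 1)) (cechC S x N d) ∘ₗ P.subtype
  let ψ := (LinearMap.range (cechD S x N d)).mkQ.restrictScalars R ∘ₗ
    LinearMap.fst R (cechC S x N (d + 1)) (cechC S x N d) ∘ₗ P.subtype
  have hφ : LinearMap.range φ ≤ (G.quotientSMul hf).lcGrade hx d (μ + δ) := by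
    rintro _ ⟨⟨⟨c, b⟩, ⟨-, hb⟩, hbc⟩, rfl⟩
    exact ⟨_, G.cechCMap_mkQ_mem_cocycles hx hf hb hbc, rfl⟩
  have hker : LinearMap.ker φ ≤ LinearMap.ker ψ := by
    rintro ⟨⟨c, b⟩, ⟨hc, _⟩, hbc⟩ hb
    exact (Submodule.Quotient.mk_eq_zero _).mpr <| mem_range_cechD_of_smul_eq x hK hc.1 hbc <|
      (Submodule.Quotient.mk_eq_zero _).mp hb
  refine (fg_range_of_ker_le hker (hfg.of_le hφ)).of_le ?_
  rintro _ ⟨⟨c, hc, rfl⟩, hfc⟩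
  obtain ⟨b, hb, hbc⟩ := G.exists_proj_eq_self_cechD_eq_smul hx hf hc <|
    (Submodule.Quotient.mk_eq_zero _).mp hfc
  exact ⟨⟨(c, b), ⟨hc, hb⟩, hbc⟩, rfl⟩

end Step

end GradingProjections

end Finiteness

section HomogeneousParameters

variable {R S : Type} [CommRing R] [CommRing S] [Algebra R S] {𝒜 : ℤ → Submodule R S}
  {n : ℕ} {x : Fin n → S} {N : Type} [AddCommGroup N] [Module S N]

/-- Homogeneous elements `y` of positive degree generating, up to radical and modulo the annihilator
of `N`, the ideal spanned by `x`. They replace `x` in the computation of the local cohomology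
of `N`. -/
structure IsHomogeneousParameters (𝒜 : ℤ → Submodule R S) (x : Fin n → S) (N : Type)
    [AddCommGroup N] [Module S N] {d : ℕ} (y : Fin d → S) : Prop where
  homogeneous : ∀ j, ∃ δ > 0, y j ∈ 𝒜 δ
  mem_span : ∀ j, y j ∈ Ideal.span (Set.range x)
  mem_radical : ∀ i, x i ∈ (Ideal.span (Set.range y) ⊔ Module.annihilator S N).radical

namespace IsHomogeneousParameters

variable {d : ℕ}

theorem lcVanish_iff {y : Fin d → S} (h : IsHomogeneousParameters 𝒜 x N y) (i : ℕ) :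
    lcVanish S x N i ↔ lcVanish S y N i :=
  lcVanish_iff_of_radical x y h.mem_radical
    (fun j => Ideal.le_radical (Ideal.mem_sup_left (h.mem_span j))) i N le_rfl

theorem lcVanish_of_lt {y : Fin d → S} (h : IsHomogeneousParameters 𝒜 x N y) {i : ℕ}
    (hi : d < i) : lcVanish S x N i :=
  (h.lcVanish_iff i).mpr (_root_.lcVanish_of_lt y N hi)

variable {Q : Type} [AddCommGroup Q] [Module S Q]

theorem of_annihilator_le {y : Fin d → S} (h : IsHomogeneousParameters 𝒜 x N y)
    (hQ : Module.annihilator S N ≤ Module.annihilator S Q) :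
    IsHomogeneousParameters 𝒜 x Q y :=
  ⟨h.homogeneous, h.mem_span, fun i => Ideal.radical_mono (sup_le_sup_left hQ _) (h.mem_radical i)⟩

theorem init {y : Fin (d + 1) → S} (h : IsHomogeneousParameters 𝒜 x N y)
    (hQ : Module.annihilator S N ≤ Module.annihilator S Q)
    (hy : y (Fin.last d) ∈ Module.annihilator S Q) :
    IsHomogeneousParameters 𝒜 x Q (Fin.init y) where
  homogeneous j := h.homogeneous _
  mem_span j := h.mem_span _
  mem_radical i := by
    refine Ideal.radical_mono (sup_le (Ideal.span_le.mpr ?_) (hQ.trans le_sup_right))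
      (h.mem_radical i)
    rintro _ ⟨j, rfl⟩
    induction j using Fin.lastCases with
    | last => exact Ideal.mem_sup_right hy
    | cast j => exact Ideal.mem_sup_left (Ideal.subset_span ⟨j, rfl⟩)

section Last

variable {y : Fin (d + 1) → S} (h : IsHomogeneousParameters 𝒜 x N y)

include h

theorem lcVanish_ker_lsmul_last :
    lcVanish S x (LinearMap.ker (LinearMap.lsmul S N (y (Fin.last d)))) (d + 1) :=
  (h.init (LinearMap.annihilator_le_of_injective _ (Submodule.injective_subtype _))
    (mem_annihilator_ker_lsmul _)).lcVanish_of_lt d.lt_succ_self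

theorem quotient_lsmul_last :
    IsHomogeneousParameters 𝒜 x (N ⧸ LinearMap.range (LinearMap.lsmul S N (y (Fin.last d))))
      (Fin.init y) :=
  h.init (LinearMap.annihilator_le_of_surjective _ (Submodule.mkQ_surjective _))
    (mem_annihilator_quotient_range_lsmul _)

end Last

end IsHomogeneousParameters

namespace GradingProjections

variable [Module R N] [IsScalarTower R S N]

theorem finite_of_isHomogeneousParameters_zero [Module.Finite S N]
    (hgen : Algebra.adjoin R (Set.range x) = ⊤) {y : Fin 0 → S}
    (hy : IsHomogeneousParameters 𝒜 x N y) : Module.Finite R (cechC S x N 0) := by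
  have : Module.Finite R N := finite_of_mem_radical_annihilator hgen fun i => by
    simpa only [Set.range_eq_empty, Ideal.span_empty, bot_sup_eq] using hy.mem_radical i
  exact finite_cechC_zero

variable [SetLike.GradedMonoid 𝒜] {w : Fin n → ℤ} (hx : ∀ i, x i ∈ 𝒜 (w i)) {d : ℕ}

theorem exists_lcGrade_eq_bot (hgen : Algebra.adjoin R (Set.range x) = ⊤) [Module.Finite S N]
    (G : GradingProjections 𝒜 N) {y : Fin d → S} (hy : IsHomogeneousParameters 𝒜 x N y) :
    ∃ a : ℤ, ∀ μ, a ≤ μ → G.lcGrade hx d μ = ⊥ := by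
  induction d generalizing N with
  | zero =>
    have := finite_of_isHomogeneousParameters_zero hgen hy
    obtain ⟨a, ha⟩ := (G.cochains hx 0).exists_proj_eq_zero_of_finite
    refine ⟨a, fun μ hμ => (G.lcGrade_eq_bot_iff hx 0 μ).mpr fun c hc => ⟨0, ?_⟩⟩
    exact (map_zero _).trans ((ha μ hμ c).symm.trans hc.2)
  | succ d ih =>
    obtain ⟨δ, hδ, hf⟩ := hy.homogeneous (Fin.last d)
    obtain ⟨a, ha⟩ := ih (G.quotientSMul hf) hy.quotient_lsmul_last
    set f := y (Fin.last d)
    have hpow (k : ℕ) : ∀ μ, a ≤ μ → ∀ c ∈ G.cocycles hx (d + 1) μ,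
        f ^ k • c ∈ LinearMap.range (cechD S x N d) → c ∈ LinearMap.range (cechD S x N d) := by
      induction k with
      | zero => exact fun μ _ c _ h => by rwa [pow_zero, one_smul] at h
      | succ k ihk =>
        refine fun μ hμ c hc h => G.mem_range_cechD_of_smul_mem hx hf hy.lcVanish_ker_lsmul_last
          (ha _ (by lia)) hc (ihk (μ + δ) (by lia) _ (G.smul_mem_cocycles hx hf hc) ?_)
        rwa [smul_smul, ← pow_succ]
    refine ⟨a, fun μ hμ => (G.lcGrade_eq_bot_iff hx (d + 1) μ).mpr fun c hc => ?_⟩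
    obtain ⟨k, hk⟩ := exists_cechDprev_eq_pow_smul_of_mem_radical x le_rfl
      (Ideal.le_radical (Ideal.mem_sup_left (hy.mem_span (Fin.last d)))) c hc.1
    exact hpow k μ hμ c hc hk

theorem fg_lcGrade [IsNoetherianRing R] (hgen : Algebra.adjoin R (Set.range x) = ⊤)
    [Module.Finite S N] (G : GradingProjections 𝒜 N) {y : Fin d → S}
    (hy : IsHomogeneousParameters 𝒜 x N y) (μ : ℤ) : (G.lcGrade hx d μ).FG := by
  induction d generalizing N μ with
  | zero =>
    have := finite_of_isHomogeneousParameters_zero hgen hy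
    exact (IsNoetherian.noetherian (G.cocycles hx 0 μ)).map _
  | succ d ih =>
    obtain ⟨δ, hδ, hf⟩ := hy.homogeneous (Fin.last d)
    obtain ⟨a, ha⟩ := G.exists_lcGrade_eq_bot hx hgen hy
    set f := y (Fin.last d)
    have hfg (t : ℕ) : ∀ μ, a - t * δ ≤ μ → (G.lcGrade hx (d + 1) μ).FG := by
      induction t with
      | zero =>
        intro μ hμ
        rw [ha μ (by simpa only [Nat.cast_zero, zero_mul, sub_zero] using hμ)]
        exact Submodule.fg_bot
      | succ t iht =>
        intro μ hμ
        refine Submodule.fg_of_fg_map_of_fg_inf_ker ((LinearMap.lsmul S _ f).restrictScalars R)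
          ((iht (μ + δ) (by push_cast at hμ; linarith)).of_le ?_)
          (G.fg_lcGrade_inf_ker_smul hx hf hy.lcVanish_ker_lsmul_last
            (ih (G.quotientSMul hf) hy.quotient_lsmul_last _))
        rintro _ ⟨_, ⟨c, hc, rfl⟩, rfl⟩
        exact ⟨f • c, G.smul_mem_cocycles hx hf hc, rfl⟩
    refine hfg (a - μ).toNat μ ?_
    nlinarith [Int.self_le_toNat (a - μ)]

end GradingProjections

end HomogeneousParameters

section Cohomology

variable {A : Type} [CommRing A] {n : ℕ} (x : Fin n → A)
  {M : Type} [AddCommGroup M] [Module A M]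
  {N : Type} [AddCommGroup N] [Module A N]

/-- The class in local cohomology of a Čech cocycle. -/
noncomputable def lcClass (M : Type) [AddCommGroup M] [Module A M] (i : ℕ) :
    LinearMap.ker (cechD A x M i) →ₗ[A] lcMod A x M i :=
  Submodule.mkQ _

theorem lcClass_surjective (i : ℕ) : Function.Surjective (lcClass x M i) :=
  Submodule.mkQ_surjective _

theorem lcClass_eq_zero_iff (i : ℕ) (z : LinearMap.ker (cechD A x M i)) :
    lcClass x M i z = 0 ↔ ∃ b, cechDprev A x M i b = z :=
  Submodule.Quotient.mk_eq_zero _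

theorem lcVanish_iff_subsingleton (i : ℕ) :
    lcVanish A x M i ↔ Subsingleton (lcMod A x M i) := by
  rw [lcVanish_iff]
  refine ⟨fun h => subsingleton_of_forall_eq 0 ((lcClass_surjective x i).forall.mpr fun z =>
    (lcClass_eq_zero_iff x i z).mpr (h z z.2)), fun _ z hz => ?_⟩
  exact (lcClass_eq_zero_iff x i ⟨z, hz⟩).mp (Subsingleton.elim _ _)

/-- The map induced on Čech cocycles by a linear map. -/
noncomputable def cocycleMap (i : ℕ) (φ : M →ₗ[A] N) :
    LinearMap.ker (cechD A x M i) →ₗ[A] LinearMap.ker (cechD A x N i) :=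
  (cechCMap x i φ).restrict fun c hc => by
    rw [LinearMap.mem_ker] at hc ⊢
    rw [cechD_cechCMap, hc, map_zero]

/-- The map induced on local cohomology by a linear map. -/
noncomputable def lcMap (i : ℕ) (φ : M →ₗ[A] N) : lcMod A x M i →ₗ[A] lcMod A x N i :=
  Submodule.mapQ _ _ (cocycleMap x i φ) <| by
    rintro z ⟨b, hb⟩
    exact ⟨cechCMap x _ φ b, (cechDprev_cechCMap x i φ b).trans (congrArg (cechCMap x i φ) hb)⟩

theorem lcMap_lcClass (i : ℕ) (φ : M →ₗ[A] N) (z : LinearMap.ker (cechD A x M i)) :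
    lcMap x i φ (lcClass x M i z) = lcClass x N i (cocycleMap x i φ z) :=
  rfl

variable {P : Type} [AddCommGroup P] [Module A P] {ψ : P →ₗ[A] M} {φ : M →ₗ[A] N}

theorem exists_cocycle_sub_eq_cechDprev (hex : Function.Exact ψ φ) (hφ : Function.Surjective φ)
    {i : ℕ} (hψ : lcVanish A x (LinearMap.ker ψ) (i + 1)) {z : cechC A x M i}
    (hz : cechD A x M i z = 0) (hb : ∃ b, cechDprev A x N i b = cechCMap x i φ z) :
    ∃ v, cechD A x P i v = 0 ∧ ∃ b, cechDprev A x M i b = z - cechCMap x i ψ v := by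
  obtain ⟨b, hb⟩ := hb
  obtain ⟨b, rfl⟩ := cechCMap_surjective x _ hφ b
  rw [cechDprev_cechCMap] at hb
  obtain ⟨a, ha⟩ := (cechCMap_exact x i hex (z - cechDprev A x M i b)).mp
    (by rw [map_sub, hb, sub_self])
  have hrange : cechCMap x i (LinearMap.range ψ).subtype (cechCMap x i ψ.rangeRestrict a) =
      cechCMap x i ψ a := by
    rw [← cechCMap_comp]
    rfl
  have hcocycle : cechD A x _ i (cechCMap x i ψ.rangeRestrict a) = 0 := by
    apply cechCMap_injective x _ (LinearMap.range ψ).injective_subtype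
    rw [← cechD_cechCMap, hrange, ha, map_sub, hz, cechD_cechDprev, sub_zero, map_zero]
  obtain ⟨v, hv, hva⟩ := exists_cocycle_lift x (LinearMap.ker ψ).injective_subtype
    ψ.surjective_rangeRestrict
    (fun m => by rw [← LinearMap.mem_ker, LinearMap.ker_rangeRestrict]; simp) i hψ _ hcocycle
  refine ⟨v, hv, b, ?_⟩
  have hψv : cechCMap x i ψ v = cechCMap x i ψ a := by
    rw [← hrange, ← hva, ← cechCMap_comp]
    rfl
  rw [hψv, ha, sub_sub_cancel]

end Cohomology

section SpecialFiber

open TensorProduct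

theorem exists_bijective_tensor_quotient {R L L' : Type} [CommRing R] (I : Ideal R)
    [AddCommGroup L] [Module R L] [AddCommGroup L'] [Module R L'] (f : L →ₗ[R] L')
    (hf : Function.Surjective f) (hker : LinearMap.ker f = I • ⊤) :
    ∃ g : L ⊗[R] (R ⧸ I) →ₗ[R] L',
      (∀ h r, g (h ⊗ₜ[R] Ideal.Quotient.mk I r) = r • f h) ∧ Function.Bijective g := by
  let e := tensorQuotEquivQuotSMul L I ≪≫ₗ Submodule.quotEquivOfEq _ _ hker.symm ≪≫ₗ
    f.quotKerEquivOfSurjective hf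
  refine ⟨e, fun h r => ?_, e.bijective⟩
  change f.quotKerEquivOfSurjective hf (Submodule.quotEquivOfEq _ _ hker.symm
    (tensorQuotEquivQuotSMul _ I (_ ⊗ₜ[R] Ideal.Quotient.mk I r))) = _
  rw [tensorQuotEquivQuotSMul_tmul_mk]
  exact f.map_smul r h

theorem exists_bijective_restrictScalars_tensor_quotient {R A H H' : Type} [CommRing R]
    [CommRing A] [Algebra R A] (I : Ideal R) [AddCommGroup H] [Module A H] [AddCommGroup H']
    [Module A H'] (φ : H →ₗ[A] H') (hφ : Function.Surjective φ)
    (hker : LinearMap.ker φ = I.map (algebraMap R A) • ⊤) :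
    ∃ g : RestrictScalars R A H ⊗[R] (R ⧸ I) →ₗ[R] RestrictScalars R A H',
      (∀ (h : H) r, g (h ⊗ₜ[R] Ideal.Quotient.mk I r) = algebraMap R A r • φ h) ∧
        Function.Bijective g := by
  let := Module.compHom H (algebraMap R A)
  let := Module.compHom H' (algebraMap R A)
  have : IsScalarTower R A H := RestrictScalars.isScalarTower R A H
  have : IsScalarTower R A H' := RestrictScalars.isScalarTower R A H'
  refine exists_bijective_tensor_quotient I (φ.restrictScalars R) hφ ?_
  rw [← Submodule.restrictScalars_top R A, ← Ideal.smul_restrictScalars, ← hker]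
  rfl

variable {R : Type} [CommRing R] {A : Type} [CommRing A] [Algebra R A] {n : ℕ} (x : Fin n → A)
  {M : Type} [AddCommGroup M] [Module A M]

/-- The combinations of `s` elements of `M` with fixed coefficients `r`. -/
def combination (A M : Type) [CommRing A] [Algebra R A] [AddCommGroup M] [Module A M] {s : ℕ}
    (r : Fin s → R) : (Fin s → M) →ₗ[A] M :=
  ∑ i, algebraMap R A (r i) • LinearMap.proj i

theorem cechCMap_combination {s : ℕ} (r : Fin s → R) (p : ℕ) (v : cechC A x (Fin s → M) p) :
    cechCMap x p (combination A M r) v =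
      ∑ i, algebraMap R A (r i) • cechCMap x p (LinearMap.proj i) v := by
  simp only [combination, map_sum, map_smul, LinearMap.sum_apply, LinearMap.smul_apply]

variable [Module R M] [IsScalarTower R A M]

theorem cechTmul_eq_cechLMap (k : Type) [AddCommGroup k] [Module R k] (T : Finset (Fin n))
    (c : cechL A x M T) (a : k) :
    cechTmul R A M k x T c a = cechLMap x T (tmulRightS R A M k a) c := by
  unfold cechTmul cechLMap
  refine LinearMap.congr_fun ?_ c
  refine IsLocalizedModule.ext (.powers (∏ i ∈ T, x i)) (LocalizedModule.mkLinearMap _ M)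
    (IsLocalizedModule.map_units (LocalizedModule.mkLinearMap _ _)) ?_
  rw [LocalizedModule.lift_comp, IsLocalizedModule.map_comp]

variable (I : Ideal R)

/-- The reduction `m ↦ m ⊗ 1` of a module modulo an ideal of the base ring. -/
noncomputable abbrev toFiber : M →ₗ[A] M ⊗[R] (R ⧸ I) := tmulRightS R A M (R ⧸ I) 1

theorem tmulRightS_mk (r : R) :
    tmulRightS R A M (R ⧸ I) (Ideal.Quotient.mk I r) = algebraMap R A r • toFiber I := by
  refine LinearMap.ext fun m => ?_
  change m ⊗ₜ[R] Ideal.Quotient.mk I r = algebraMap R A r • m ⊗ₜ[R] 1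
  rw [algebraMap_smul, ← TensorProduct.tmul_smul, Algebra.smul_def, mul_one]
  rfl

theorem toFiber_surjective : Function.Surjective (toFiber (A := A) (M := M) I) := by
  intro z
  induction z using TensorProduct.induction_on with
  | zero => exact ⟨0, map_zero _⟩
  | tmul m c =>
    obtain ⟨r, rfl⟩ := Ideal.Quotient.mk_surjective c
    exact ⟨algebraMap R A r • m, (map_smul _ _ _).trans
      (LinearMap.congr_fun (tmulRightS_mk I r) m).symm⟩
  | add a b ha hb =>
    obtain ⟨a, rfl⟩ := ha
    obtain ⟨b, rfl⟩ := hb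
    exact ⟨a + b, map_add _ _ _⟩

theorem annihilator_le_annihilator_tensor_quotient :
    Module.annihilator A M ≤ Module.annihilator A (M ⊗[R] (R ⧸ I)) :=
  LinearMap.annihilator_le_of_surjective (toFiber I) (toFiber_surjective I)

theorem toFiber_eq_zero_iff (m : M) : toFiber (A := A) I m = 0 ↔ m ∈ I • (⊤ : Submodule R M) := by
  rw [← (tensorQuotEquivQuotSMul M I).map_eq_zero_iff, ← Submodule.Quotient.mk_eq_zero]
  change tensorQuotEquivQuotSMul M I (m ⊗ₜ[R] Ideal.Quotient.mk I 1) = 0 ↔ _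
  rw [tensorQuotEquivQuotSMul_tmul_mk, one_smul]

theorem map_le_annihilator_tensor_quotient :
    I.map (algebraMap R A) ≤ Module.annihilator A (M ⊗[R] (R ⧸ I)) := by
  refine Ideal.map_le_iff_le_comap.mpr fun r hr => Module.mem_annihilator.mpr <|
    (toFiber_surjective (A := A) I).forall.mpr fun m => ?_
  rw [← map_smul, toFiber_eq_zero_iff, algebraMap_smul]
  exact Submodule.smul_mem_smul hr Submodule.mem_top

theorem combination_exact_toFiber {s : ℕ} (r : Fin s → R) :
    Function.Exact (combination A M r) (toFiber (A := A) (Ideal.span (Set.range r))) := by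
  have hcomb (v : Fin s → M) : combination A M r v = ∑ i, r i • v i := by
    simp only [combination, LinearMap.sum_apply, LinearMap.smul_apply, LinearMap.proj_apply,
      algebraMap_smul]
  refine fun m => (toFiber_eq_zero_iff _ m).trans ⟨fun hm => ?_, ?_⟩
  · refine Submodule.smul_le (P := (LinearMap.range (combination A M r)).restrictScalars R).mpr
      (fun a ha m _ => ?_) hm
    obtain ⟨c, rfl⟩ := Ideal.mem_span_range_iff_exists_fun.mp ha
    refine ⟨fun i => c i • m, ?_⟩
    rw [hcomb, Finset.sum_smul]
    exact Finset.sum_congr rfl fun i _ => by rw [smul_smul, mul_comm]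
  · rintro ⟨v, rfl⟩
    rw [hcomb]
    exact Submodule.sum_mem _ fun i _ =>
      Submodule.smul_mem_smul (Ideal.subset_span ⟨i, rfl⟩) Submodule.mem_top

variable {d : ℕ} (hvan : ∀ (K : Type) [AddCommGroup K] [Module A K],
  Module.annihilator A M ≤ Module.annihilator A K → lcVanish A x K (d + 1))

include hvan

theorem exists_cocycle_lift_toFiber (z : cechC A x (M ⊗[R] (R ⧸ I)) d)
    (hz : cechD A x _ d z = 0) :
    ∃ b : cechC A x M d, cechD A x M d b = 0 ∧ cechCMap x d (toFiber I) b = z :=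
  exists_cocycle_lift x (Submodule.injective_subtype _) (toFiber_surjective I)
    (LinearMap.exact_subtype_ker_map _) d
    (hvan _ (LinearMap.annihilator_le_of_injective _ (Submodule.injective_subtype _))) z hz

theorem lcVanish_of_lcVanish_tensor_quotient (h : lcVanish A x M d) :
    lcVanish A x (M ⊗[R] (R ⧸ I)) d :=
  lcVanish_right x (Submodule.injective_subtype _) (toFiber_surjective I)
    (LinearMap.exact_subtype_ker_map _) d h
    (hvan _ (LinearMap.annihilator_le_of_injective _ (Submodule.injective_subtype _)))

theorem exists_cocycles_sub_sum_smul_eq_cechDprev {s : ℕ} (r : Fin s → R) {z : cechC A x M d}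
    (hz : cechD A x M d z = 0)
    (hb : ∃ b, cechDprev A x _ d b = cechCMap x d (toFiber (Ideal.span (Set.range r))) z) :
    ∃ v : Fin s → cechC A x M d, (∀ i, cechD A x M d (v i) = 0) ∧
      ∃ b, cechDprev A x M d b = z - ∑ i, algebraMap R A (r i) • v i := by
  have hann : Module.annihilator A M ≤ Module.annihilator A (LinearMap.ker (combination A M r)) :=
    (Module.annihilator_pi.ge.trans' (le_iInf fun _ => le_rfl)).trans
      (LinearMap.annihilator_le_of_injective _ (Submodule.injective_subtype _))
  obtain ⟨v, hv, b, hb⟩ := exists_cocycle_sub_eq_cechDprev x (combination_exact_toFiber r)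
    (toFiber_surjective _) (hvan _ hann) hz hb
  exact ⟨fun i => cechCMap x d (LinearMap.proj i) v,
    fun i => by rw [cechD_cechCMap, hv, map_zero], b, by rw [hb, cechCMap_combination]⟩

theorem lcMap_toFiber_surjective :
    Function.Surjective (lcMap x d (toFiber (A := A) (M := M) I)) := by
  refine (lcClass_surjective x d).forall.mpr fun z => ?_
  obtain ⟨b, hb, hbz⟩ := exists_cocycle_lift_toFiber x I hvan z z.2
  exact ⟨lcClass x M d ⟨b, hb⟩, congrArg (lcClass x _ d) (Subtype.ext hbz)⟩

theorem ker_lcMap_toFiber [IsNoetherianRing R] :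
    LinearMap.ker (lcMap x d (toFiber (A := A) (M := M) I)) = I.map (algebraMap R A) • ⊤ := by
  refine le_antisymm (fun h hh => ?_) (Submodule.smul_le.mpr fun a ha h _ => ?_)
  · obtain ⟨s, r, rfl⟩ := Submodule.fg_iff_exists_fin_generating_family.mp
      (IsNoetherian.noetherian I)
    obtain ⟨z, rfl⟩ := lcClass_surjective x d h
    obtain ⟨v, hv, b, hb⟩ := exists_cocycles_sub_sum_smul_eq_cechDprev x hvan r z.2
      ((lcClass_eq_zero_iff x d _).mp hh)
    have hclass : lcClass x M d z = ∑ i, algebraMap R A (r i) • lcClass x M d ⟨v i, hv i⟩ := by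
      simp only [← map_smul, ← map_sum]
      refine sub_eq_zero.mp ((map_sub _ _ _).symm.trans ((lcClass_eq_zero_iff x d _).mpr ⟨b, ?_⟩))
      rw [hb]
      simp
    rw [hclass]
    exact Submodule.sum_mem _ fun i _ => Submodule.smul_mem_smul
      (Ideal.mem_map_of_mem _ (Ideal.subset_span ⟨i, rfl⟩)) Submodule.mem_top
  · obtain ⟨z, rfl⟩ := lcClass_surjective x d h
    rw [LinearMap.mem_ker, map_smul, lcMap_lcClass, ← map_smul]
    refine (congrArg _ (Subtype.ext ?_)).trans (map_zero _)
    exact smul_cechC_eq_zero x (map_le_annihilator_tensor_quotient I ha) _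

theorem exists_bijective_lcMod_tensor_quotient [IsNoetherianRing R] :
    ∃ g : RestrictScalars R A (lcMod A x M d) ⊗[R] (R ⧸ I) →ₗ[R]
      RestrictScalars R A (lcMod A x (M ⊗[R] (R ⧸ I)) d),
      (∀ (z : LinearMap.ker (cechD A x M d)) (c : R ⧸ I),
        ∃ zz : LinearMap.ker (cechD A x (M ⊗[R] (R ⧸ I)) d),
          (∀ T, zz.1 T = cechTmul R A M (R ⧸ I) x T.1 (z.1 T) c) ∧
          g ((Submodule.Quotient.mk z : lcMod A x M d) ⊗ₜ[R] c) =
            (Submodule.Quotient.mk zz : lcMod A x (M ⊗[R] (R ⧸ I)) d)) ∧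
      Function.Bijective g := by
  obtain ⟨g, hg, hbij⟩ := exists_bijective_restrictScalars_tensor_quotient I _
    (lcMap_toFiber_surjective x I hvan) (ker_lcMap_toFiber x I hvan)
  refine ⟨g, fun z => Ideal.Quotient.mk_surjective.forall.mpr fun r =>
    ⟨algebraMap R A r • cocycleMap x d (toFiber I) z, fun T => ?_, hg _ r⟩, hbij⟩
  rw [cechTmul_eq_cechLMap, tmulRightS_mk]
  exact ((congrFun (LinearMap.congr_fun ((cechCMap x d).map_smul _ _) z.1) T).symm)

end SpecialFiber

namespace GradingProjections

open TensorProduct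

variable {R S : Type} [CommRing R] [CommRing S] [Algebra R S] {𝒜 : ℤ → Submodule R S}
  [SetLike.GradedMonoid 𝒜] {n : ℕ} {x : Fin n → S} {w : Fin n → ℤ} (hx : ∀ i, x i ∈ 𝒜 (w i))
  {N : Type} [AddCommGroup N] [Module R N] [Module S N] [IsScalarTower R S N]
  (G : GradingProjections 𝒜 N)

theorem lcGradeNonzero_iff {ℳ : ℤ → AddSubgroup N} (hℳ : ∀ μ m, m ∈ ℳ μ ↔ G.proj μ m = m)
    (i : ℕ) (μ : ℤ) : lcGradeNonzero S x N ℳ w i μ ↔ G.lcGrade hx i μ ≠ ⊥ := by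
  rw [Ne, lcGrade_eq_bot_iff, lcGradeNonzero]
  push Not
  refine exists_congr fun c => ?_
  have hgrade : (∀ T, c T ∈ cechGrade S x N ℳ w μ T.1) ↔ (G.cochains hx i).proj μ c = c :=
    ⟨fun h => funext fun T => (G.mem_cechGrade_iff hx hℳ μ T.1 (c T)).mp (h T),
      fun h T => (G.mem_cechGrade_iff hx hℳ μ T.1 (c T)).mpr (congrFun h T)⟩
  rw [hgrade, cechIsBoundary_iff]
  exact ⟨fun ⟨hμ, hc, hb⟩ => ⟨⟨hc, hμ⟩, hb⟩, fun ⟨⟨hc, hμ⟩, hb⟩ => ⟨hμ, hc, hb⟩⟩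

theorem proj_mem_cocycles {i : ℕ} (μ : ℤ) {c : cechC S x N i} (hc : cechD S x N i c = 0) :
    (G.cochains hx i).proj μ c ∈ G.cocycles hx i μ :=
  ⟨(G.cechD_proj hx i μ c).trans (by rw [hc, map_zero]), proj_proj_self _ _ _⟩

theorem lcVanish_of_forall_lcGrade_eq_bot {i : ℕ} (h : ∀ μ, G.lcGrade hx i μ = ⊥) :
    lcVanish S x N i := by
  refine (lcVanish_iff x i).mpr fun z hz => ?_
  obtain ⟨s, hs⟩ := (G.cochains hx i).exists_sum_proj z
  rw [← hs s subset_rfl]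
  exact Submodule.sum_mem (LinearMap.range (cechDprev S x N i)) fun μ _ =>
    (G.lcGrade_eq_bot_iff hx i μ).mp (h μ) _ (G.proj_mem_cocycles hx μ hz)

variable {d : ℕ} (hvan : ∀ (K : Type) [AddCommGroup K] [Module S K],
  Module.annihilator S N ≤ Module.annihilator S K → lcVanish S x K (d + 1)) {μ : ℤ}

include hvan

theorem lcGrade_tensor_quotient_eq_bot (I : Ideal R) (h : G.lcGrade hx d μ = ⊥) :
    (G.tensor (R ⧸ I)).lcGrade hx d μ = ⊥ := by
  rw [lcGrade_eq_bot_iff] at h ⊢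
  rintro z ⟨hz, hzμ⟩
  obtain ⟨b, hb, rfl⟩ := exists_cocycle_lift_toFiber x I hvan z hz
  obtain ⟨e, he⟩ := h _ (G.proj_mem_cocycles hx μ hb)
  refine ⟨cechCMap x _ (toFiber I) e, ?_⟩
  rw [cechDprev_cechCMap, he, G.cechCMap_proj hx (G.tensor (R ⧸ I)) fun _ _ => rfl]
  exact hzμ

theorem lcGrade_le_smul {s : ℕ} (r : Fin s → R)
    (h : (G.tensor (R ⧸ Ideal.span (Set.range r))).lcGrade hx d μ = ⊥) :
    G.lcGrade hx d μ ≤ Ideal.span (Set.range r) • G.lcGrade hx d μ := by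
  rw [lcGrade_eq_bot_iff] at h
  rintro _ ⟨z, ⟨hz, hzμ : (G.cochains hx d).proj μ z = z⟩, rfl⟩
  obtain ⟨v, hv, b, hb⟩ := exists_cocycles_sub_sum_smul_eq_cechDprev x hvan r hz
    (h _ ⟨(cechD_cechCMap ..).trans ((congrArg _ hz).trans (map_zero _)),
      (G.cechCMap_proj hx _ (fun _ _ => rfl) d μ z).symm.trans (congrArg _ hzμ)⟩)
  have hproj : cechDprev S x N d ((G.cochains hx _).proj μ b) =
      z - ∑ i, r i • (G.cochains hx d).proj μ (v i) := by
    simp only [cechDprev_proj, hb, algebraMap_smul, map_sub, map_sum, map_smul, hzμ]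
  let q := (LinearMap.range (cechDprev S x N d)).mkQ.restrictScalars R
  have hclass : q z = ∑ i, r i • q ((G.cochains hx d).proj μ (v i)) := by
    simp only [← map_smul q, ← map_sum q]
    exact (Submodule.Quotient.eq _).mpr ⟨_, hproj⟩
  change q z ∈ _
  rw [hclass]
  exact Submodule.sum_mem _ fun i _ => Submodule.smul_mem_smul (Ideal.subset_span ⟨i, rfl⟩)
    ⟨_, G.proj_mem_cocycles hx μ (hv i), rfl⟩

theorem lcGrade_tensor_residue_eq_bot_iff [IsNoetherianRing R] [IsLocalRing R]
    (hfg : (G.lcGrade hx d μ).FG) :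
    (G.tensor (R ⧸ IsLocalRing.maximalIdeal R)).lcGrade hx d μ = ⊥ ↔
      G.lcGrade hx d μ = ⊥ := by
  refine ⟨fun h => ?_, G.lcGrade_tensor_quotient_eq_bot hx hvan _⟩
  refine Submodule.eq_bot_of_le_smul_of_le_jacobson_bot (IsLocalRing.maximalIdeal R) _ hfg ?_
    (IsLocalRing.maximalIdeal_le_jacobson _)
  obtain ⟨s, r, hr⟩ := Submodule.fg_iff_exists_fin_generating_family.mp
    (IsNoetherian.noetherian (IsLocalRing.maximalIdeal R))
  rw [← hr] at h ⊢
  exact G.lcGrade_le_smul hx hvan r h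

end GradingProjections

section HomogeneousPrimes

variable {R S : Type} [CommRing R] [CommRing S] [Algebra R S] (𝒜 : ℤ → Submodule R S)
  [GradedAlgebra 𝒜]

theorem isHomogeneous_of_mem_minimalPrimes {I p : Ideal S} (hI : I.IsHomogeneous 𝒜)
    (hp : p ∈ I.minimalPrimes) : p.IsHomogeneous 𝒜 := by
  have hle : I ≤ (p.homogeneousCore 𝒜).toIdeal := by
    rw [← hI.toIdeal_homogeneousCore_eq_self]
    exact Ideal.homogeneousCore_mono 𝒜 hp.1.2
  rw [Ideal.IsHomogeneous.iff_eq]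
  exact (Ideal.toIdeal_homogeneousCore_le 𝒜 p).antisymm
    (hp.2 ⟨hp.1.1.homogeneousCore, hle⟩ (Ideal.toIdeal_homogeneousCore_le 𝒜 p))

theorem exists_homogeneous_mem_notMem {p q : Ideal S} (hq : q.IsHomogeneous 𝒜) (hqp : ¬q ≤ p) :
    ∃ f ∈ q, f ∉ p ∧ ∃ δ, f ∈ 𝒜 δ := by
  classical
  obtain ⟨f, hfq, hfp⟩ := SetLike.not_le_iff_exists.mp hqp
  by_contra! h
  refine hfp ?_
  rw [← DirectSum.sum_support_decompose 𝒜 f]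
  refine Ideal.sum_mem _ fun δ _ => ?_
  by_contra hδ
  exact h _ (hq δ hfq) hδ δ (SetLike.coe_mem _)

variable {n : ℕ} {x : Fin n → S} {w : Fin n → ℤ} (hx : ∀ i, x i ∈ 𝒜 (w i)) (hw : ∀ i, 0 < w i)

include hx hw

theorem exists_homogeneous_mem_forall_notMem {P : Finset (Ideal S)} {p : Ideal S} [hp : p.IsPrime]
    (hP : ∀ q ∈ P, q.IsHomogeneous 𝒜) (hle : ∀ q ∈ P, ¬q ≤ p) (hxp : ∃ i, x i ∉ p) :
    ∃ f ∈ Ideal.span (Set.range x), ∃ δ > 0, f ∈ 𝒜 δ ∧ f ∉ p ∧ ∀ q ∈ P, f ∈ q := by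
  have hex : ∀ q ∈ P, ∃ g ∈ q, g ∉ p ∧ ∃ δ, g ∈ 𝒜 δ :=
    fun q hq => exists_homogeneous_mem_notMem 𝒜 (hP q hq) (hle q hq)
  choose! g hgq hgp δ hgδ using hex
  obtain ⟨i, hi⟩ := hxp
  -- A high power of `x i` makes the degree of the product positive.
  let k := (∑ q ∈ P, δ q).natAbs + 1
  have hxk : x i ^ k ∈ Ideal.span (Set.range x) :=
    Ideal.pow_mem_of_mem _ (Ideal.subset_span (Set.mem_range_self i)) _ (Nat.succ_pos _)
  refine ⟨(∏ q ∈ P, g q) * x i ^ k, Ideal.mul_mem_left _ _ hxk,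
    ∑ q ∈ P, δ q + k • w i, ?_, ?_, ?_, fun q hq => ?_⟩
  · have hk : (k : ℤ) ≤ k * w i := le_mul_of_one_le_right k.cast_nonneg (hw i)
    rw [nsmul_eq_mul]
    omega
  · exact SetLike.mul_mem_graded (SetLike.prod_mem_graded 𝒜 δ g hgδ)
      (SetLike.pow_mem_graded k (hx i))
  · rw [hp.mul_mem_iff_mem_or_mem, hp.prod_mem_iff, hp.pow_mem_iff_mem k (Nat.succ_pos _)]
    rintro (⟨q, hq, hqp⟩ | hip)
    exacts [hgp q hq hqp, hi hip]
  · exact Ideal.mul_mem_right _ _ (Ideal.mem_of_dvd _ (Finset.dvd_prod_of_mem g hq) (hgq q hq))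

theorem exists_homogeneous_forall_notMem_of_finset (P : Finset (Ideal S))
    (hprime : ∀ p ∈ P, p.IsPrime) (hhom : ∀ p ∈ P, p.IsHomogeneous 𝒜)
    (hanti : ∀ p ∈ P, ∀ q ∈ P, p ≤ q → p = q) (hxP : ∀ p ∈ P, ∃ i, x i ∉ p) :
    ∃ f ∈ Ideal.span (Set.range x), ∃ δ > 0, f ∈ 𝒜 δ ∧ ∀ p ∈ P, f ∉ p := by
  classical
  induction P using Finset.induction_on with
  | empty => exact ⟨0, zero_mem _, 1, one_pos, zero_mem _, fun p hp => by simp at hp⟩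
  | insert p P hpP ih =>
    simp only [Finset.forall_mem_insert] at hprime hhom hxP hanti ⊢
    obtain ⟨f, hfx, a, ha, hfa, hfP⟩ := ih hprime.2 hhom.2 (fun q hq => (hanti.2 q hq).2) hxP.2
    by_cases hfp : f ∈ p
    swap
    · exact ⟨f, hfx, a, ha, hfa, hfp, hfP⟩
    have := hprime.1
    obtain ⟨g, hgx, b, hb, hgb, hgp, hgP⟩ := exists_homogeneous_mem_forall_notMem 𝒜 hx hw hhom.2
      (fun q hq hqp => hpP ((hanti.2 q hq).1 hqp ▸ hq)) hxP.1
    lift a to ℕ using ha.le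
    lift b to ℕ using hb.le
    have ha' : 0 < a := Int.natCast_pos.mp ha
    have hb' : 0 < b := Int.natCast_pos.mp hb
    have hfb : f ^ b ∈ 𝒜 (a * b) := by
      simpa only [nsmul_eq_mul, mul_comm] using SetLike.pow_mem_graded b hfa
    have hga : g ^ a ∈ 𝒜 (a * b) := by
      simpa only [nsmul_eq_mul] using SetLike.pow_mem_graded a hgb
    refine ⟨f ^ b + g ^ a, add_mem (Ideal.pow_mem_of_mem _ hfx _ hb')
      (Ideal.pow_mem_of_mem _ hgx _ ha'), a * b, mul_pos ha hb, add_mem hfb hga, ?_,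
      fun q hq => ?_⟩
    · rw [Ideal.add_mem_iff_right _ (Ideal.pow_mem_of_mem _ hfp _ hb')]
      exact fun h => hgp (hprime.1.mem_of_pow_mem _ h)
    · rw [Ideal.add_mem_iff_left _ (Ideal.pow_mem_of_mem _ (hgP q hq) _ ha')]
      exact fun h => hfP q hq ((hprime.2 q hq).mem_of_pow_mem _ h)

theorem exists_homogeneous_forall_minimalPrimes_notMem [IsNoetherianRing S] {I : Ideal S}
    (hI : I.IsHomogeneous 𝒜) (hxI : ∀ p ∈ I.minimalPrimes, ∃ i, x i ∉ p) :
    ∃ f ∈ Ideal.span (Set.range x), ∃ δ > 0, f ∈ 𝒜 δ ∧ ∀ p ∈ I.minimalPrimes, f ∉ p := by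
  have hfin := Ideal.finite_minimalPrimes_of_isNoetherianRing S I
  simpa only [Set.Finite.mem_toFinset] using
    exists_homogeneous_forall_notMem_of_finset 𝒜 hx hw hfin.toFinset
      (fun p hp => (hfin.mem_toFinset.mp hp).1.1)
      (fun p hp => isHomogeneous_of_mem_minimalPrimes 𝒜 hI (hfin.mem_toFinset.mp hp))
      (fun p hp q hq hpq => hpq.antisymm
        ((hfin.mem_toFinset.mp hq).2 (hfin.mem_toFinset.mp hp).1 hpq))
      (fun p hp => hxI p (hfin.mem_toFinset.mp hp))

end HomogeneousPrimes

theorem ringKrullDim_quotient_sup_span_singleton_succ_le {S : Type} [CommRing S] {I : Ideal S}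
    {f : S} (hf : ∀ p ∈ I.minimalPrimes, f ∉ p) :
    ringKrullDim (S ⧸ I ⊔ Ideal.span {f}) + 1 ≤ ringKrullDim (S ⧸ I) := by
  have h := Module.supportDim_quotSMulTop_succ_le_of_notMem_minimalPrimes (M := S ⧸ I) (x := f)
    (by rwa [Ideal.annihilator_quotient])
  have hsupp : Module.support S (QuotSMulTop f (S ⧸ I)) =
      Module.support S (S ⧸ I ⊔ Ideal.span {f}) := by
    rw [Module.support_quotSMulTop, Module.support_eq_zeroLocus, Module.support_eq_zeroLocus,
      Ideal.annihilator_quotient, Ideal.annihilator_quotient, PrimeSpectrum.zeroLocus_sup,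
      PrimeSpectrum.zeroLocus_span]
  rwa [Module.supportDim, hsupp, ← Module.supportDim, Module.supportDim_quotient_eq_ringKrullDim,
    Module.supportDim_quotient_eq_ringKrullDim] at h

namespace IsHomogeneousParameters

variable {R S : Type} [CommRing R] [CommRing S] [Algebra R S] {𝒜 : ℤ → Submodule R S}
  {n d : ℕ} {x : Fin n → S}

theorem zero {N : Type} [AddCommGroup N] [Module S N]
    (hx : ∀ i, x i ∈ (Module.annihilator S N).radical) :
    IsHomogeneousParameters 𝒜 x N (0 : Fin d → S) where
  homogeneous _ := ⟨1, one_pos, zero_mem _⟩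
  mem_span _ := zero_mem _
  mem_radical i := Ideal.radical_mono le_sup_right (hx i)

theorem cons {I : Ideal S} {f : S} {y : Fin d → S}
    (h : IsHomogeneousParameters 𝒜 x (S ⧸ I ⊔ Ideal.span {f}) y) {δ : ℤ} (hδ : 0 < δ)
    (hfδ : f ∈ 𝒜 δ) (hfx : f ∈ Ideal.span (Set.range x)) :
    IsHomogeneousParameters 𝒜 x (S ⧸ I) (Fin.cons f y : Fin (d + 1) → S) where
  homogeneous := Fin.cases ⟨δ, hδ, hfδ⟩ h.homogeneous
  mem_span := Fin.cases hfx h.mem_span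
  mem_radical i := by
    have hi := h.mem_radical i
    rw [Ideal.annihilator_quotient] at hi ⊢
    rwa [Fin.range_cons, Ideal.span_insert, sup_comm (Ideal.span {f}), sup_assoc,
      sup_comm (Ideal.span {f})]

end IsHomogeneousParameters

section PolynomialRing

open MvPolynomial IsLocalRing

attribute [local instance] MvPolynomial.weightedGradedAlgebra

variable {R : Type} [CommRing R] {n : ℕ} {w : Fin n → ℤ}

theorem weightedHomogeneousComponent_zero_eq_C (hw : ∀ i, 0 < w i) (f : MvPolynomial (Fin n) R) :
    weightedHomogeneousComponent w 0 f = C (constantCoeff f) := by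
  classical
  have hweight : ∀ β : Fin n →₀ ℕ, Finsupp.weight w β = 0 ↔ β = 0 := fun β => by
    rw [Finsupp.weight_apply, Finsupp.sum_fintype _ _ fun i => zero_smul ℕ (w i),
      Finset.sum_eq_zero_iff_of_nonneg fun i _ => nsmul_nonneg (hw i).le _, Finsupp.ext_iff]
    simp only [Finset.mem_univ, forall_const, smul_eq_zero, (hw _).ne', or_false,
      Finsupp.coe_zero, Pi.zero_apply]
  ext β
  simp only [coeff_weightedHomogeneousComponent, hweight, coeff_C, constantCoeff_eq]
  by_cases h : β = 0
  · rw [if_pos h, if_pos h.symm, h]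
  · rw [if_neg h, if_neg (Ne.symm h)]

variable [IsLocalRing R]

theorem le_comap_constantCoeff_of_isHomogeneous (hw : ∀ i, 0 < w i)
    {p : Ideal (MvPolynomial (Fin n) R)} (hp : p.IsHomogeneous (weightedHomogeneousSubmodule R w))
    (hne : p ≠ ⊤) : p ≤ (maximalIdeal R).comap constantCoeff := fun f hf hunit => by
  have h := weightedHomogeneousComponent_mem_of_mem R w hp hf 0
  rw [weightedHomogeneousComponent_zero_eq_C hw] at h
  exact hne (Ideal.eq_top_of_isUnit_mem _ h (hunit.map C))

theorem comap_constantCoeff_le {p : Ideal (MvPolynomial (Fin n) R)}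
    (hm : (maximalIdeal R).map C ≤ p) (hX : ∀ i, X i ∈ p) :
    (maximalIdeal R).comap constantCoeff ≤ p := fun f hf => by
  have hmk : Ideal.Quotient.mk p = ((Ideal.Quotient.mk p).comp C).comp constantCoeff := by
    ext i
    · simp only [RingHom.comp_apply, constantCoeff_C]
    · simp only [RingHom.comp_apply, constantCoeff_X, map_zero, Ideal.Quotient.eq_zero_iff_mem, hX]
  rw [← Ideal.Quotient.eq_zero_iff_mem, hmk]
  exact Ideal.Quotient.eq_zero_iff_mem.mpr (hm (Ideal.mem_map_of_mem C hf))

section MinimalPrimes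

variable {I : Ideal (MvPolynomial (Fin n) R)} (hw : ∀ i, 0 < w i)
  (hI : I.IsHomogeneous (weightedHomogeneousSubmodule R w))

include hw hI

theorem le_comap_constantCoeff_of_mem_minimalPrimes {p : Ideal (MvPolynomial (Fin n) R)}
    (hp : p ∈ I.minimalPrimes) : p ≤ (maximalIdeal R).comap constantCoeff :=
  le_comap_constantCoeff_of_isHomogeneous hw
    (isHomogeneous_of_mem_minimalPrimes (weightedHomogeneousSubmodule R w) hI hp) hp.1.1.ne_top

theorem X_mem_radical_of_forall_X_mem (hm : (maximalIdeal R).map C ≤ I)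
    {p : Ideal (MvPolynomial (Fin n) R)} (hp : p ∈ I.minimalPrimes) (hX : ∀ i, X i ∈ p)
    (i : Fin n) : X i ∈ I.radical := by
  rw [← Ideal.sInf_minimalPrimes, Ideal.mem_sInf]
  intro q hq
  have hqp : q ≤ p := (le_comap_constantCoeff_of_mem_minimalPrimes hw hI hq).trans
    (comap_constantCoeff_le (hm.trans hp.1.2) hX)
  have hpq : p ≤ q := hp.2 hq.1 hqp
  exact hpq (hX i)

theorem X_mem_radical_of_ringKrullDim_quotient_le_zero
    (hd : ringKrullDim (MvPolynomial (Fin n) R ⧸ I) ≤ 0) (i : Fin n) : X i ∈ I.radical := by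
  have hmax := Ideal.krullDimLE_zero_quotient_iff_forall_minimalPrimes_isMaximal.mp
    ((Order.krullDimLE_iff 0 _).mpr hd)
  rw [← Ideal.sInf_minimalPrimes, Ideal.mem_sInf]
  intro p hp
  rw [(hmax p hp).eq_of_le (Ideal.IsPrime.comap constantCoeff).ne_top
    (le_comap_constantCoeff_of_mem_minimalPrimes hw hI hp), Ideal.mem_comap, constantCoeff_X]
  exact zero_mem _

end MinimalPrimes

theorem exists_isHomogeneousParameters_quotient [IsNoetherianRing R] (hw : ∀ i, 0 < w i) {d : ℕ}
    {I : Ideal (MvPolynomial (Fin n) R)} (hI : I.IsHomogeneous (weightedHomogeneousSubmodule R w))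
    (hm : (maximalIdeal R).map C ≤ I) (hd : ringKrullDim (MvPolynomial (Fin n) R ⧸ I) ≤ d) :
    ∃ y : Fin d → MvPolynomial (Fin n) R, IsHomogeneousParameters
      (weightedHomogeneousSubmodule R w) X (MvPolynomial (Fin n) R ⧸ I) y := by
  induction d generalizing I with
  | zero =>
    exact ⟨0, .zero fun i => by
      simpa only [Ideal.annihilator_quotient] using
        X_mem_radical_of_ringKrullDim_quotient_le_zero hw hI hd i⟩
  | succ d ih =>
    by_cases hXI : ∀ i, X i ∈ I.radical
    · exact ⟨0, .zero fun i => by simpa only [Ideal.annihilator_quotient] using hXI i⟩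
    obtain ⟨f, hfX, δ, hδ, hfδ, hfI⟩ := exists_homogeneous_forall_minimalPrimes_notMem
      (weightedHomogeneousSubmodule R w) (isWeightedHomogeneous_X R w) hw hI fun p hp => by
        by_contra! hX
        exact hXI (X_mem_radical_of_forall_X_mem hw hI hm hp hX)
    obtain ⟨y, hy⟩ := ih
      (hI.sup (Ideal.homogeneous_span _ {f} fun g hg => hg ▸ ⟨δ, hfδ⟩)) (hm.trans le_sup_left)
      (ENat.WithBot.add_le_add_one_right_iff.mp
        ((ringKrullDim_quotient_sup_span_singleton_succ_le hfI).trans hd))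
    exact ⟨Fin.cons f y, hy.cons hδ hfδ hfX⟩

end PolynomialRing

namespace GradingProjections

variable {R S : Type} [CommRing R] [CommRing S] [Algebra R S] {𝒜 : ℤ → Submodule R S}
  {N : Type} [AddCommGroup N] [Module R N] [Module S N] (G : GradingProjections 𝒜 N)

/-- The grading of a graded algebra, as a module over itself. -/
def self (𝒜 : ℤ → Submodule R S) [GradedAlgebra 𝒜] : GradingProjections 𝒜 S where
  proj μ := GradedAlgebra.proj 𝒜 μ
  proj_smul hf μ g := by
    rw [add_comm]
    exact DirectSum.coe_decompose_mul_add_of_left_mem 𝒜 hf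
  proj_proj μ ν g := by
    classical
    change (DirectSum.decompose 𝒜 (DirectSum.decompose 𝒜 g ν : S) μ : S) = ite _ _ _
    rw [DirectSum.decompose_coe, DirectSum.coe_of_apply]
    simp only [eq_comm]
    split_ifs <;> rfl
  exists_sum_proj g := by
    classical
    refine ⟨_, fun t ht => (Finset.sum_subset ht fun μ _ hμ => ?_).symm.trans
      (DirectSum.sum_support_decompose 𝒜 g)⟩
    have h : DirectSum.decompose 𝒜 g μ = 0 := DFinsupp.notMem_support_iff.mp hμ
    exact congrArg Subtype.val h

/-- The grading of the quotient of a graded algebra by a homogeneous ideal. -/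
def quotientIdeal [GradedAlgebra 𝒜] {J : Ideal S} (hJ : J.IsHomogeneous 𝒜) :
    GradingProjections 𝒜 (S ⧸ J) :=
  (self 𝒜).quotient J fun μ _ hf => hJ μ hf

theorem quotientIdeal_proj_mk_of_mem [GradedAlgebra 𝒜] {J : Ideal S} (hJ : J.IsHomogeneous 𝒜)
    {μ : ℤ} {f : S} (hf : f ∈ 𝒜 μ) :
    (quotientIdeal hJ).proj μ (Ideal.Quotient.mk J f) = Ideal.Quotient.mk J f :=
  congrArg (Ideal.Quotient.mk J) (DirectSum.decompose_of_mem_same 𝒜 hf)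

theorem range_quotientIdeal_proj [GradedAlgebra 𝒜] {J : Ideal S} (hJ : J.IsHomogeneous 𝒜)
    (μ : ℤ) : LinearMap.range ((quotientIdeal hJ).proj μ) =
      (𝒜 μ).map (Ideal.Quotient.mkₐ R J).toLinearMap := by
  refine le_antisymm ?_ (Submodule.map_le_iff_le_comap.mpr fun f hf =>
    ⟨_, quotientIdeal_proj_mk_of_mem hJ hf⟩)
  rintro _ ⟨g, rfl⟩
  obtain ⟨f, rfl⟩ := Ideal.Quotient.mk_surjective g
  exact ⟨_, (DirectSum.decompose 𝒜 f μ).2, rfl⟩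

include G in
theorem isHomogeneous_annihilator [GradedAlgebra 𝒜] :
    (Module.annihilator S N).IsHomogeneous 𝒜 := by
  intro μ f hf
  rw [Module.mem_annihilator] at hf ⊢
  intro m
  obtain ⟨s, hs⟩ := G.exists_sum_proj m
  obtain ⟨t, ht⟩ := (self 𝒜).exists_sum_proj f
  rw [← hs s subset_rfl, Finset.smul_sum]
  refine Finset.sum_eq_zero fun ν _ => ?_
  have hproj (κ : ℤ) : G.proj (ν + μ) ((self 𝒜).proj κ f • G.proj ν m) =
      if κ = μ then (self 𝒜).proj κ f • G.proj ν m else 0 := by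
    have h := G.proj_smul (SetLike.coe_mem (DirectSum.decompose 𝒜 f κ)) (ν + μ - κ) (G.proj ν m)
    rw [sub_add_cancel, G.proj_proj, smul_ite, smul_zero] at h
    exact h.trans (if_congr (by omega) rfl rfl)
  have h := hf (G.proj ν m)
  rw [← ht (insert μ t) (Finset.subset_insert μ t), Finset.sum_smul] at h
  have h' := congrArg (G.proj (ν + μ)) h
  simp only [map_zero, map_sum, hproj, Finset.sum_ite_eq', Finset.mem_insert_self, if_true] at h'
  exact h'

theorem proj_eq_zero_of_tensor_residue_proj_eq_zero [IsLocalRing R] [IsScalarTower R S N] {μ : ℤ}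
    (hfg : (LinearMap.range (G.proj μ)).FG)
    (h : ∀ z, (G.tensor (R ⧸ IsLocalRing.maximalIdeal R)).proj μ z = 0) (m : N) :
    G.proj μ m = 0 := by
  have hbot : LinearMap.range (G.proj μ) = ⊥ := by
    refine Submodule.eq_bot_of_le_smul_of_le_jacobson_bot (IsLocalRing.maximalIdeal R) _ hfg ?_
      (IsLocalRing.maximalIdeal_le_jacobson _)
    rintro _ ⟨m, rfl⟩
    have hm := (toFiber_eq_zero_iff (A := S) (IsLocalRing.maximalIdeal R) (G.proj μ m)).mp
      (h (toFiber (A := S) (IsLocalRing.maximalIdeal R) m))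
    have hmap := Submodule.mem_map_of_mem (f := G.proj μ) hm
    rwa [Submodule.map_smul'', Submodule.map_top, G.proj_proj_self] at hmap
  exact LinearMap.congr_fun (LinearMap.range_eq_bot.mp hbot) m

end GradingProjections

section FiberRadical

open IsLocalRing TensorProduct

variable {R S : Type} [CommRing R] [CommRing S] [Algebra R S]

theorem annihilator_tensor_quotient_le_radical {M : Type} [AddCommGroup M] [Module R M]
    [Module S M] [IsScalarTower R S M] [Module.Finite S M] (I : Ideal R) :
    Module.annihilator S (M ⊗[R] (R ⧸ I)) ≤
      (Module.annihilator S M ⊔ I.map (algebraMap R S)).radical := by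
  let IM : Submodule S M := I.map (algebraMap R S) • ⊤
  have hann : Module.annihilator S (M ⊗[R] (R ⧸ I)) ≤ Module.annihilator S (M ⧸ IM) := by
    intro f hf
    refine Module.mem_annihilator.mpr <| IM.mkQ_surjective.forall.mpr fun m => ?_
    rw [← map_smul, Submodule.mkQ_apply, Submodule.Quotient.mk_eq_zero,
      ← Submodule.restrictScalars_mem R, Ideal.smul_restrictScalars, Submodule.restrictScalars_top,
      ← toFiber_eq_zero_iff (A := S), map_smul]
    exact Module.mem_annihilator.mp hf _
  refine hann.trans ?_
  rw [← PrimeSpectrum.zeroLocus_subset_zeroLocus_iff, PrimeSpectrum.zeroLocus_sup,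
    ← Module.support_eq_zeroLocus, ← Module.support_eq_zeroLocus, Module.support_quotient]

variable {𝒜 : ℤ → Submodule R S} [GradedAlgebra 𝒜] {n : ℕ} {x : Fin n → S} {w : Fin n → ℤ}

theorem mem_radical_of_mem_radical_sup_map_maximalIdeal [IsLocalRing R]
    (hfg : ∀ μ, (𝒜 μ).FG) (hgen : Algebra.adjoin R (Set.range x) = ⊤) (hx : ∀ i, x i ∈ 𝒜 (w i))
    (hw : ∀ i, 0 < w i) {J : Ideal S} (hJ : J.IsHomogeneous 𝒜)
    (hxJ : ∀ i, x i ∈ (J ⊔ (maximalIdeal R).map (algebraMap R S)).radical) (i : Fin n) :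
    x i ∈ J.radical := by
  let G := GradingProjections.quotientIdeal hJ
  have hannJ : J ≤ Module.annihilator S ((S ⧸ J) ⊗[R] (R ⧸ maximalIdeal R)) := by
    simpa only [Ideal.annihilator_quotient] using
      annihilator_le_annihilator_tensor_quotient (A := S) (M := S ⧸ J) (maximalIdeal R)
  have := Module.Finite.of_surjective _
    (toFiber_surjective (A := S) (M := S ⧸ J) (maximalIdeal R))
  have := finite_of_mem_radical_annihilator (N := (S ⧸ J) ⊗[R] (R ⧸ maximalIdeal R)) hgen fun i =>
    Ideal.radical_mono (sup_le hannJ (map_le_annihilator_tensor_quotient _)) (hxJ i)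
  obtain ⟨a, ha⟩ := (G.tensor (R ⧸ maximalIdeal R)).exists_proj_eq_zero_of_finite
  have hk : a ≤ a.toNat * w i := by nlinarith [Int.self_le_toNat a, hw i]
  have hpow : x i ^ a.toNat ∈ 𝒜 (a.toNat * w i) := by
    rw [← nsmul_eq_mul]
    exact SetLike.pow_mem_graded _ (hx i)
  refine ⟨a.toNat, Ideal.Quotient.eq_zero_iff_mem.mp ?_⟩
  rw [← GradingProjections.quotientIdeal_proj_mk_of_mem hJ hpow]
  refine G.proj_eq_zero_of_tensor_residue_proj_eq_zero ?_ (ha _ hk) _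
  rw [GradingProjections.range_quotientIdeal_proj]
  exact (hfg _).map _

end FiberRadical

section PolynomialParameters

open IsLocalRing MvPolynomial TensorProduct

attribute [local instance] MvPolynomial.weightedGradedAlgebra

variable {R : Type} [CommRing R] {n : ℕ} {w : Fin n → ℤ}

theorem fg_weightedHomogeneousSubmodule (hw : ∀ i, 0 < w i) (μ : ℤ) :
    (weightedHomogeneousSubmodule R w μ).FG := by
  lift w to Fin n → ℕ using fun i => (hw i).le
  have hfin : {β : Fin n →₀ ℕ | Finsupp.weight (fun i => (w i : ℤ)) β = μ}.Finite := by
    refine (Finsupp.finite_of_nat_weight_eq w (fun i => Nat.cast_ne_zero.mp (hw i).ne')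
      μ.toNat).subset fun β hβ => ?_
    rw [Set.mem_ofPred_eq, Finsupp.weight_eq_sum] at hβ ⊢
    simp only [← hβ, nsmul_eq_mul, smul_eq_mul, ← Nat.cast_mul, ← Nat.cast_sum, Int.toNat_natCast]
  have := hfin.to_subtype
  rw [weightedHomogeneousSubmodule_eq_finsupp_supported, ← Module.Finite.iff_fg]
  exact Module.Finite.of_basis (basisRestrictSupport R _)

theorem exists_isHomogeneousParameters [IsLocalRing R] [IsNoetherianRing R] (hw : ∀ i, 0 < w i)
    {M : Type} [AddCommGroup M] [Module (MvPolynomial (Fin n) R) M] [Module R M]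
    [IsScalarTower R (MvPolynomial (Fin n) R) M] [Module.Finite (MvPolynomial (Fin n) R) M]
    (G : GradingProjections (weightedHomogeneousSubmodule R w) M) {d : ℕ}
    (hd : ringKrullDim (MvPolynomial (Fin n) R ⧸ Module.annihilator (MvPolynomial (Fin n) R)
      (M ⊗[R] (R ⧸ maximalIdeal R))) ≤ d) :
    ∃ y : Fin d → MvPolynomial (Fin n) R,
      IsHomogeneousParameters (weightedHomogeneousSubmodule R w) X M y := by
  let k := R ⧸ maximalIdeal R
  obtain ⟨y, hy⟩ := exists_isHomogeneousParameters_quotient hw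
    (G.tensor k).isHomogeneous_annihilator (map_le_annihilator_tensor_quotient _) hd
  refine ⟨y, hy.homogeneous, hy.mem_span, ?_⟩
  have hspan : (Ideal.span (Set.range y)).IsHomogeneous (weightedHomogeneousSubmodule R w) :=
    Ideal.homogeneous_span _ _ <| by
      rintro _ ⟨j, rfl⟩
      exact (hy.homogeneous j).imp fun δ h => h.2
  refine mem_radical_of_mem_radical_sup_map_maximalIdeal (fg_weightedHomogeneousSubmodule hw)
    (adjoin_range_X ..) (isWeightedHomogeneous_X R w) hw (hspan.sup G.isHomogeneous_annihilator)
    fun i => ?_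
  have hi := hy.mem_radical i
  rw [Ideal.annihilator_quotient] at hi
  rw [← Ideal.radical_idem]
  refine Ideal.radical_mono (sup_le ?_ ?_) hi
  · exact (le_sup_of_le_left le_sup_left).trans Ideal.le_radical
  · exact (annihilator_tensor_quotient_le_radical _).trans
      (Ideal.radical_mono (sup_le_sup_right le_sup_right _))

end PolynomialParameters

section TopCohomology

variable {A : Type} [CommRing A] {d : ℕ} (y : Fin d → A) {N : Type} [AddCommGroup N] [Module A N]

theorem exists_cechFrac_common_denom_of_finite {ι : Type} [Finite ι] (T : ι → Finset (Fin d))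
    (c : ∀ j, cechL A y N (T j)) : ∃ (m : ι → N) (k : ℕ), ∀ j, c j = cechFrac y (T j) (m j) k := by
  have := Fintype.ofFinite ι
  choose m k h using fun j => exists_eq_cechFrac y (T j) (c j)
  refine ⟨fun j => (∏ i ∈ T j, y i) ^ (∑ i, k i - k j) • m j, ∑ i, k i, fun j => ?_⟩
  obtain ⟨l, hl⟩ := Nat.exists_eq_add_of_le <|
    Finset.single_le_sum (f := k) (fun _ _ => Nat.zero_le _) (Finset.mem_univ j)
  beta_reduce
  rw [hl, Nat.add_sub_cancel_left, cechFrac_pow_smul, h]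

variable {y}

theorem exists_cechFrac_eq_sum_of_lcVanish (h : lcVanish A y N d)
    (c : cechL A y N Finset.univ) :
    ∃ (m : Fin d → N) (k : ℕ), c = cechFrac y Finset.univ (∑ j, y j ^ k • m j) k := by
  have hcard (T : {T : Finset (Fin d) // T.card = d}) : T.1 = Finset.univ :=
    Finset.card_eq_iff_eq_univ _ |>.mp (T.2.trans (Fintype.card_fin d).symm)
  obtain ⟨b, hb⟩ := (lcVanish_iff y d).mp h (fun T => hcard T ▸ c) <| funext fun T =>
    absurd (T.2.symm.trans_le (Finset.card_le_univ T.1)) (by simp)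
  replace hb := congrFun hb ⟨Finset.univ, Finset.card_fin d⟩
  cases d with
  | zero => exact ⟨0, 0, by simpa [cechDprev, cechFrac_zero] using hb.symm⟩
  | succ q =>
    obtain ⟨m, k, hm⟩ := exists_cechFrac_common_denom_of_finite y
      (fun j => Finset.univ.erase j) fun j => b ⟨Finset.univ.erase j, by simp⟩
    refine ⟨fun j => cechSign A j Finset.univ • m j, k, hb.symm.trans ?_⟩
    refine (cechD_apply y q b _).trans ?_
    rw [cechFrac_sum]
    refine Finset.sum_congr rfl fun j _ => ?_
    rw [cechVal_eq y b (Finset.erase_subset _ _) (by simp), hm, cechMap_cechFrac, smul_cechFrac,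
      Finset.sdiff_erase_self (Finset.mem_univ j), Finset.prod_singleton]
    exact congrArg (cechFrac y Finset.univ · k) (smul_comm ..)

theorem exists_prod_pow_smul_eq_sum_of_lcVanish (h : lcVanish A y N d) (z : N) (t : ℕ) :
    ∃ (s : ℕ) (v : Fin d → N), (∏ i, y i) ^ s • z = ∑ j, y j ^ (t + s) • v j := by
  obtain ⟨m, k, hm⟩ := exists_cechFrac_eq_sum_of_lcVanish h (cechFrac y Finset.univ z t)
  obtain ⟨u, hu⟩ := (cechFrac_eq_cechFrac_iff ..).mp hm
  refine ⟨u + k, fun j => (∏ i ∈ Finset.univ.erase j, y i) ^ (u + t) • m j, ?_⟩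
  rw [hu, Finset.smul_sum]
  refine Finset.sum_congr rfl fun j _ => ?_
  rw [smul_smul, smul_smul, ← Finset.mul_prod_erase _ y (Finset.mem_univ j)]
  congr 1
  ring

theorem exists_linearMap_apply_ne_zero (B : Type) [CommRing B] [IsDomain B] (N : Type)
    [AddCommGroup N] [Module B N] [Module.FinitePresentation B N] [FaithfulSMul B N] :
    ∃ (φ : N →ₗ[B] B) (z : N), φ z ≠ 0 := by
  let K := FractionRing B
  let ι := LocalizedModule.mkLinearMap (nonZeroDivisors B) N
  have hsupp : (⟨⊥, Ideal.isPrime_bot⟩ : PrimeSpectrum B) ∈ Module.support B N := by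
    rw [Module.support_eq_zeroLocus, Module.annihilator_eq_bot.mpr inferInstance]
    exact le_refl (⊥ : Ideal B)
  obtain ⟨z, hz⟩ := Module.mem_support_iff'.mp hsupp
  have hιz : ι z ≠ 0 := fun h => by
    obtain ⟨c, hc⟩ := (IsLocalizedModule.eq_zero_iff (nonZeroDivisors B) ι).mp h
    exact hz c (nonZeroDivisors.coe_ne_zero c) hc
  obtain ⟨f, hf⟩ := Module.Projective.exists_dual_ne_zero K hιz
  obtain ⟨φ, s, hφ⟩ := Module.FinitePresentation.exists_lift_of_isLocalizedModule
    (nonZeroDivisors B) (Algebra.linearMap B K) (f.restrictScalars B ∘ₗ ι)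
  refine ⟨φ, z, fun h => ?_⟩
  have hs : s • f (ι z) = 0 := by
    have := LinearMap.congr_fun hφ z
    rw [LinearMap.comp_apply, h, map_zero] at this
    exact this.symm
  exact hf <|
    IsLocalizedModule.smul_injective (Algebra.linearMap B K) s (hs.trans (smul_zero s).symm)

open MvPolynomial in
theorem exists_prod_X_pow_mul_notMem_span {k : Type} [CommRing k] {h : MvPolynomial (Fin d) k}
    (h0 : h ≠ 0) : ∃ t : ℕ, ∀ s : ℕ, (∏ i, X i) ^ s * h ∉
      Ideal.span (Set.range fun j => (X j : MvPolynomial (Fin d) k) ^ (t + s)) := by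
  obtain ⟨α, hα⟩ := ne_zero_iff.mp h0
  refine ⟨∑ j, α j + 1, fun s hs => ?_⟩
  have hprod : (∏ i, (X i : MvPolynomial (Fin d) k)) ^ s =
      monomial (Finsupp.equivFunOnFinite.symm fun _ => s) 1 := by
    rw [monomial_eq, ← Finset.prod_pow, Finsupp.prod_fintype _ _ fun i => pow_zero _, C_1, one_mul]
    rfl
  have hrange : (Set.range fun j => (X j : MvPolynomial (Fin d) k) ^ (∑ j, α j + 1 + s)) =
      (fun β => monomial β 1) '' Set.range fun j => Finsupp.single j (∑ j, α j + 1 + s) := by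
    rw [← Set.range_comp]
    exact congrArg Set.range (funext fun j => X_pow_eq_monomial)
  rw [hprod, hrange, mem_ideal_span_monomial_image] at hs
  obtain ⟨_, ⟨j, rfl⟩, hj⟩ := hs (Finsupp.equivFunOnFinite.symm (fun _ => s) + α) <| by
    rwa [mem_support_iff, coeff_monomial_mul, one_mul]
  have hle := hj j
  have hsum := Finset.single_le_sum (f := α) (fun _ _ => Nat.zero_le _) (Finset.mem_univ j)
  rw [Finsupp.single_eq_same, Finsupp.add_apply, Finsupp.equivFunOnFinite_symm_apply_apply] at hle
  omega

open MvPolynomial in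
theorem not_lcVanish_of_faithfulSMul {k : Type} [CommRing k] [IsDomain k] [IsNoetherianRing k]
    [Module (MvPolynomial (Fin d) k) N] [Module.Finite (MvPolynomial (Fin d) k) N]
    [FaithfulSMul (MvPolynomial (Fin d) k) N] (E : Type) [CommRing E] [Module E N]
    [Algebra A E] [IsScalarTower A E N] [Algebra (MvPolynomial (Fin d) k) E]
    [IsScalarTower (MvPolynomial (Fin d) k) E N]
    (hy : ∀ j, algebraMap (MvPolynomial (Fin d) k) E (X j) = algebraMap A E (y j)) :
    ¬ lcVanish A y N d := by
  intro h
  have := Module.finitePresentation_of_finite (MvPolynomial (Fin d) k) N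
  obtain ⟨φ, z, hz⟩ := exists_linearMap_apply_ne_zero (MvPolynomial (Fin d) k) N
  obtain ⟨t, ht⟩ := exists_prod_X_pow_mul_notMem_span hz
  obtain ⟨s, v, hv⟩ := exists_prod_pow_smul_eq_sum_of_lcVanish h z t
  have hv' : (∏ i, (X i : MvPolynomial (Fin d) k)) ^ s • z =
      ∑ j, (X j : MvPolynomial (Fin d) k) ^ (t + s) • v j := by
    have hA (a : A) (m : N) : a • m = algebraMap A E a • m := (algebraMap_smul E a m).symm
    have hB (b : MvPolynomial (Fin d) k) (m : N) : b • m = algebraMap _ E b • m :=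
      (algebraMap_smul E b m).symm
    simpa only [hA, hB, map_pow, map_prod, hy] using hv
  refine ht s ?_
  rw [← smul_eq_mul, ← map_smul, hv', map_sum]
  refine Ideal.sum_mem _ fun j _ => ?_
  rw [map_smul]
  exact Ideal.mul_mem_right _ _ (Ideal.subset_span ⟨j, rfl⟩)

end TopCohomology

section IntegralDimension

variable {B E : Type} [CommRing B] [CommRing E] {f : B →+* E}

theorem ringKrullDim_le_of_isIntegral (hf : f.IsIntegral) : ringKrullDim E ≤ ringKrullDim B := by
  let _ : Algebra B E := f.toAlgebra
  have : Algebra.IsIntegral B E := ⟨hf⟩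
  exact Order.krullDim_le_of_strictMono (PrimeSpectrum.comap f) fun p q hpq =>
    Ideal.IsIntegral.comap_lt_comap (R := B) (I := p.asIdeal) (J := q.asIdeal) hpq

theorem injective_of_isIntegral_of_ringKrullDim_le [IsDomain B] {d : ℕ} (hf : f.IsIntegral)
    (hB : ringKrullDim B = d) (hE : d ≤ ringKrullDim E) : Function.Injective f := by
  refine (injective_iff_map_eq_zero f).mpr fun b hb => by_contra fun hb0 => ?_
  have hker : f.kerLift.IsIntegral :=
    RingHom.IsIntegral.tower_top (Ideal.Quotient.mk (RingHom.ker f)) f.kerLift hf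
  have hlt := ringKrullDim_succ_le_of_surjective (Ideal.Quotient.mk (RingHom.ker f))
    Ideal.Quotient.mk_surjective (mem_nonZeroDivisors_of_ne_zero hb0)
    (Ideal.Quotient.eq_zero_iff_mem.mpr hb)
  have hle : ((d + 1 : ℕ) : WithBot ℕ∞) ≤ d := by
    push_cast
    exact (add_le_add_left (hE.trans (ringKrullDim_le_of_isIntegral hker)) 1).trans
      (hlt.trans_eq hB)
  exact absurd (Nat.cast_le.mp hle) (Nat.not_succ_le_self d)

end IntegralDimension

namespace GradingProjections

variable {R S : Type} [CommRing R] [CommRing S] [Algebra R S] {𝒜 : ℤ → Submodule R S}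
  {N : Type} [AddCommGroup N] [Module R N] [Module S N] (G : GradingProjections 𝒜 N)
  {d : ℕ} {y : Fin d → S}

theorem eq_top_of_exists_sub_mem_span_smul
    (hy : ∀ j, ∃ δ > 0, y j ∈ 𝒜 δ) {a : ℤ} (hG : ∀ μ < a, G.proj μ = 0)
    {W Q : Submodule R N}
    (hW : ∀ m, ∃ b ∈ W, m - b ∈ Ideal.span (Set.range y) • (⊤ : Submodule S N))
    (hWQ : ∀ μ, ∀ m ∈ W, G.proj μ m ∈ Q) (hyQ : ∀ j, ∀ m ∈ Q, y j • m ∈ Q) : Q = ⊤ := by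
  choose δ hδ hyδ using hy
  have hproj (e : ℕ) : ∀ μ < a + e, ∀ m, G.proj μ m ∈ Q := by
    induction e with
    | zero =>
      intro μ hμ m
      rw [hG μ (by simpa using hμ)]
      exact Q.zero_mem
    | succ e ih =>
      intro μ hμ m
      obtain ⟨b, hb, hmb⟩ := hW m
      rw [← add_sub_cancel b m, map_add]
      refine Q.add_mem (hWQ μ b hb) ?_
      refine Submodule.smul_induction_on (p := fun c => G.proj μ c ∈ Q) hmb (fun r hr m _ => ?_)
        fun u v hu hv => by
          rw [map_add]
          exact Q.add_mem hu hv
      obtain ⟨f, rfl⟩ := (Submodule.mem_span_range_iff_exists_fun S).mp hr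
      rw [Finset.sum_smul, map_sum]
      refine Q.sum_mem fun j _ => ?_
      have hj := G.proj_smul (hyδ j) (μ - δ j) (f j • m)
      rw [sub_add_cancel] at hj
      rw [smul_eq_mul, mul_comm, mul_smul, hj]
      refine hyQ j _ (ih _ ?_ _)
      have := hδ j
      push_cast at hμ
      omega
  refine eq_top_iff.mpr fun m _ => ?_
  obtain ⟨s, hs⟩ := G.exists_sum_proj m
  rw [← hs s subset_rfl]
  refine Q.sum_mem fun μ _ => hproj (μ - a + 1).toNat μ ?_ m
  have := Int.self_le_toNat (μ - a + 1)
  omega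

include G in
theorem finite_of_finite_quotient [IsScalarTower R S N]
    (hy : ∀ j, ∃ δ > 0, y j ∈ 𝒜 δ) {a : ℤ} (hG : ∀ μ < a, G.proj μ = 0)
    [Module.Finite R (N ⧸ (Ideal.span (Set.range y) • (⊤ : Submodule S N)))]
    {B : Type} [CommRing B] [Algebra R B] [Module B N] [IsScalarTower R B N] {b : Fin d → B}
    (hb : ∀ j (m : N), b j • m = y j • m) : Module.Finite B N := by
  let P : Submodule S N := Ideal.span (Set.range y) • ⊤
  obtain ⟨r, g, hg⟩ := Module.Finite.exists_fin (R := R) (M := N ⧸ P)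
  choose m hm using fun i => P.mkQ_surjective (g i)
  choose c hc using fun i => G.exists_proj_eq_zero_of_le (m i)
  let Q : Submodule B N := Submodule.span B
    (Set.range fun p : Σ i, Set.Ico a (c i) => G.proj p.2 (m p.1))
  refine ⟨(?_ : Q = ⊤) ▸ Submodule.fg_span (Set.finite_range _)⟩
  rw [← Submodule.restrictScalars_eq_top_iff R]
  refine G.eq_top_of_exists_sub_mem_span_smul hy hG (W := Submodule.span R (Set.range m)) ?_ ?_ ?_
  · intro n
    obtain ⟨f, hf⟩ := (Submodule.mem_span_range_iff_exists_fun R).mp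
      (hg ▸ Submodule.mem_top : P.mkQ n ∈ Submodule.span R (Set.range g))
    refine ⟨∑ i, f i • m i, Submodule.sum_mem _ fun i _ =>
      Submodule.smul_mem _ _ (Submodule.subset_span ⟨i, rfl⟩), (Submodule.Quotient.eq P).mp ?_⟩
    refine hf.symm.trans (Eq.symm <| (map_sum P.mkQ _ _).trans ?_)
    exact Finset.sum_congr rfl fun i _ => by rw [LinearMap.map_smul_of_tower, hm]
  · intro μ
    refine (Submodule.span_le (p := (Q.restrictScalars R).comap (G.proj μ))).mpr ?_
    rintro _ ⟨i, rfl⟩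
    by_cases hμ : μ ∈ Set.Ico a (c i)
    · exact Submodule.subset_span ⟨⟨i, μ, hμ⟩, rfl⟩
    · have h0 : G.proj μ (m i) = 0 := by
        rcases lt_or_ge μ a with h | h
        · rw [hG μ h, LinearMap.zero_apply]
        · exact hc i μ (not_lt.mp fun h' => hμ ⟨h, h'⟩)
      exact (h0 ▸ Q.zero_mem : G.proj μ (m i) ∈ Q)
  · exact fun j n hn => hb j n ▸ Q.smul_mem (b j) hn

end GradingProjections

namespace IsHomogeneousParameters

variable {R S : Type} [CommRing R] [CommRing S] [Algebra R S] {𝒜 : ℤ → Submodule R S}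
  [GradedAlgebra 𝒜] {n d : ℕ} {x : Fin n → S} {y : Fin d → S}
  {N : Type} [AddCommGroup N] [Module S N]

theorem finite_quotient_annihilator (hy : IsHomogeneousParameters 𝒜 x N y)
    (hneg : ∀ μ < 0, 𝒜 μ = ⊥) (hgen : Algebra.adjoin R (Set.range x) = ⊤)
    (hN : (Module.annihilator S N).IsHomogeneous 𝒜)
    {B : Type} [CommRing B] [Algebra R B] [Algebra B (S ⧸ Module.annihilator S N)]
    [IsScalarTower R B (S ⧸ Module.annihilator S N)] {b : Fin d → B}
    (hb : ∀ j, algebraMap B _ (b j) = Ideal.Quotient.mk (Module.annihilator S N) (y j)) :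
    Module.Finite B (S ⧸ Module.annihilator S N) := by
  let J := Module.annihilator S N
  let P : Submodule S (S ⧸ J) := Ideal.span (Set.range y) • ⊤
  have hP : Ideal.span (Set.range y) ⊔ J ≤ Module.annihilator S ((S ⧸ J) ⧸ P) := by
    refine sup_le ?_ ?_
    · refine fun f hf => Module.mem_annihilator.mpr <| P.mkQ_surjective.forall.mpr fun g => ?_
      rw [← map_smul]
      exact (Submodule.Quotient.mk_eq_zero P).mpr (Submodule.smul_mem_smul hf Submodule.mem_top)
    · exact (Ideal.annihilator_quotient (I := J)).ge.trans
        (LinearMap.annihilator_le_of_surjective _ P.mkQ_surjective)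
  have : Module.Finite R ((S ⧸ J) ⧸ P) := finite_of_mem_radical_annihilator hgen fun i =>
    Ideal.radical_mono hP (hy.mem_radical i)
  refine (GradingProjections.quotientIdeal hN).finite_of_finite_quotient
    hy.homogeneous (a := 0) (b := b) (fun μ hμ => ?_) fun j m => ?_
  · rw [← LinearMap.range_eq_bot, GradingProjections.range_quotientIdeal_proj, hneg μ hμ,
      Submodule.map_bot]
  · rw [Algebra.smul_def, hb]
    exact (Algebra.smul_def (y j) m).symm

theorem not_lcVanish_of_algebra {k : Type} [Field k] [Algebra R k]
    [Algebra k (S ⧸ Module.annihilator S N)] [IsScalarTower R k (S ⧸ Module.annihilator S N)]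
    [Module.Finite S N] (hy : IsHomogeneousParameters 𝒜 x N y)
    (hneg : ∀ μ < 0, 𝒜 μ = ⊥) (hgen : Algebra.adjoin R (Set.range x) = ⊤)
    (hN : (Module.annihilator S N).IsHomogeneous 𝒜)
    (hd : d ≤ ringKrullDim (S ⧸ Module.annihilator S N)) : ¬ lcVanish S y N d := by
  let E := S ⧸ Module.annihilator S N
  let B := MvPolynomial (Fin d) k
  let θ : B →ₐ[k] E := MvPolynomial.aeval fun j => Ideal.Quotient.mk (Module.annihilator S N) (y j)
  have hθ : ∀ j, θ (MvPolynomial.X j) = Ideal.Quotient.mk _ (y j) := MvPolynomial.aeval_X _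
  let _ : Algebra B E := θ.toAlgebra
  have : IsScalarTower k B E := .of_algebraMap_eq' θ.comp_algebraMap.symm
  have : IsScalarTower R B E := .to₁₃₄ R k B E
  have : Module.Finite B E := hy.finite_quotient_annihilator hneg hgen hN hθ
  have hinj : Function.Injective θ :=
    injective_of_isIntegral_of_ringKrullDim_le (f := θ.toRingHom)
      (Algebra.IsIntegral.of_finite B E).isIntegral
      (by rw [MvPolynomial.ringKrullDim_of_isNoetherianRing, ringKrullDim_eq_zero_of_field,
        zero_add, Nat.card_fin]) hd
  let hE := Module.isTorsionBySet_annihilator S N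
  let _ : Module E N := hE.module
  have : IsScalarTower S E N := hE.isScalarTower
  have : Module.Finite E N := Module.Finite.of_restrictScalars_finite S E N
  let _ : Module B N := Module.compHom N θ.toRingHom
  have : IsScalarTower B E N := .of_algebraMap_smul fun _ _ => rfl
  have : Module.Finite B N := Module.Finite.trans E N
  have : FaithfulSMul B N := by
    refine Module.annihilator_eq_bot.mp ((Submodule.eq_bot_iff _).mpr fun b hb => hinj ?_)
    obtain ⟨f, hf⟩ := Ideal.Quotient.mk_surjective (θ b)
    rw [map_zero, ← hf, Ideal.Quotient.eq_zero_iff_mem, Module.mem_annihilator]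
    intro m
    exact (congrArg (· • m) hf).trans (Module.mem_annihilator.mp hb m)
  exact not_lcVanish_of_faithfulSMul E hθ

theorem not_lcVanish [IsLocalRing R] [Module.Finite S N] (hy : IsHomogeneousParameters 𝒜 x N y)
    (hneg : ∀ μ < 0, 𝒜 μ = ⊥) (hgen : Algebra.adjoin R (Set.range x) = ⊤)
    (hN : (Module.annihilator S N).IsHomogeneous 𝒜)
    (hm : (IsLocalRing.maximalIdeal R).map (algebraMap R S) ≤ Module.annihilator S N)
    (hd : d ≤ ringKrullDim (S ⧸ Module.annihilator S N)) : ¬ lcVanish S x N d := by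
  let _ : Field (R ⧸ IsLocalRing.maximalIdeal R) := Ideal.Quotient.field _
  let _ : Algebra (R ⧸ IsLocalRing.maximalIdeal R) (S ⧸ Module.annihilator S N) :=
    Ideal.Quotient.algebraQuotientOfLEComap (Ideal.map_le_iff_le_comap.mp hm)
  have : IsScalarTower R (R ⧸ IsLocalRing.maximalIdeal R) (S ⧸ Module.annihilator S N) :=
    .of_algebraMap_eq fun _ => rfl
  rw [hy.lcVanish_iff]
  exact hy.not_lcVanish_of_algebra (k := R ⧸ IsLocalRing.maximalIdeal R) hneg hgen hN hd

end IsHomogeneousParameters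

theorem weightedHomogeneousSubmodule_eq_bot {R : Type} [CommRing R] {n : ℕ} {w : Fin n → ℤ}
    (hw : ∀ i, 0 ≤ w i) {μ : ℤ} (hμ : μ < 0) :
    MvPolynomial.weightedHomogeneousSubmodule R w μ = ⊥ := by
  refine (Submodule.eq_bot_iff _).mpr fun f hf => by_contra fun hf0 => ?_
  obtain ⟨β, hβ⟩ := MvPolynomial.ne_zero_iff.mp hf0
  refine hμ.not_ge (hf hβ ▸ ?_)
  rw [Finsupp.weight_eq_sum]
  exact Finset.sum_nonneg fun i _ => nsmul_nonneg (hw i) _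

section PolynomialFiber

open IsLocalRing MvPolynomial TensorProduct

attribute [local instance] MvPolynomial.weightedGradedAlgebra

theorem not_lcVanish_tensor_residue {R : Type} [CommRing R] [IsLocalRing R] {n : ℕ} {w : Fin n → ℤ}
    (hw : ∀ i, 0 ≤ w i) {M : Type} [AddCommGroup M] [Module (MvPolynomial (Fin n) R) M]
    [Module R M] [IsScalarTower R (MvPolynomial (Fin n) R) M]
    [Module.Finite (MvPolynomial (Fin n) R) M]
    (G : GradingProjections (weightedHomogeneousSubmodule R w) M) {d : ℕ}
    {y : Fin d → MvPolynomial (Fin n) R}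
    (hy : IsHomogeneousParameters (weightedHomogeneousSubmodule R w) X M y)
    (hd : d ≤ ringKrullDim (MvPolynomial (Fin n) R ⧸ Module.annihilator (MvPolynomial (Fin n) R)
      (M ⊗[R] (R ⧸ maximalIdeal R)))) :
    ¬ lcVanish (MvPolynomial (Fin n) R) X (M ⊗[R] (R ⧸ maximalIdeal R)) d := by
  have := Module.Finite.of_surjective _
    (toFiber_surjective (A := MvPolynomial (Fin n) R) (M := M) (maximalIdeal R))
  exact (hy.of_annihilator_le (annihilator_le_annihilator_tensor_quotient _)).not_lcVanish
    (fun μ hμ => weightedHomogeneousSubmodule_eq_bot hw hμ) (adjoin_range_X ..)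
    (G.tensor _).isHomogeneous_annihilator (map_le_annihilator_tensor_quotient _) hd

end PolynomialFiber

namespace GradingProjections

open IsLocalRing TensorProduct

variable {R S : Type} [CommRing R] [CommRing S] [Algebra R S] {𝒜 : ℤ → Submodule R S}
  [SetLike.GradedMonoid 𝒜] {n d : ℕ} {x : Fin n → S} {w : Fin n → ℤ} {N : Type} [AddCommGroup N]
  [Module R N] [Module S N] [IsScalarTower R S N] (G : GradingProjections 𝒜 N)

include G in
theorem exists_isGreatest_lcGradeNonzero [IsNoetherianRing R] [IsLocalRing R] [Module.Finite S N]
    {ℳ : ℤ → AddSubgroup N} (hℳ : ∀ μ m, m ∈ ℳ μ ↔ G.proj μ m = m)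
    (hx : ∀ i, x i ∈ 𝒜 (w i)) (hgen : Algebra.adjoin R (Set.range x) = ⊤) {y : Fin d → S}
    (hy : IsHomogeneousParameters 𝒜 x N y) (hN : ¬ lcVanish S x N d) :
    ∃ e, IsGreatest {μ | lcGradeNonzero S x N ℳ w d μ} e ∧
      IsGreatest {μ | lcGradeNonzero S x (N ⊗[R] (R ⧸ maximalIdeal R))
        (fun ν => AddSubgroup.closure {z | ∃ m ∈ ℳ ν, ∃ c, z = m ⊗ₜ[R] c}) w d μ} e := by
  obtain ⟨a, ha⟩ := G.exists_lcGrade_eq_bot hx hgen hy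
  obtain ⟨e, he⟩ : ∃ e, IsGreatest {μ | G.lcGrade hx d μ ≠ ⊥} e :=
    Int.exists_greatest_of_bdd ⟨a, fun μ hμ => not_lt.mp fun h => hμ (ha μ h.le)⟩ <|
      not_forall.mp fun h => hN (G.lcVanish_of_forall_lcGrade_eq_bot hx h)
  have hiff (μ : ℤ) := G.lcGrade_tensor_residue_eq_bot_iff hx (μ := μ)
    (fun K _ _ hK => (hy.of_annihilator_le hK).lcVanish_of_lt d.lt_succ_self)
    (G.fg_lcGrade hx hgen hy μ)
  refine ⟨e, ?_, ?_⟩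
  · simpa only [G.lcGradeNonzero_iff hx hℳ] using he
  · simpa only [lcGradeNonzero_iff hx _ (G.mem_closure_tmul_iff hℳ _), Ne, hiff] using he

end GradingProjections

open MvPolynomial in
/-- **Cohomology of the special fiber.**  Let `(R, 𝔪, k)` be a Noetherian local ring,
`S := R[X_1, …, X_n]` graded with `deg X_i = w i > 0`, `M` a finitely generated graded
`S`-module, `M̄ := M ⊗_R k` and `d := dim M̄`.  Then (local cohomology being computed by
the Čech complex on the variables):
* the natural graded map `H^d_{S₊}(M) ⊗_R k → H^d_{S₊}(M̄)`, characterized on cocycles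
  by `z ⊗ c ↦ (class of the cocycle `T ↦ (z_T) ⊗ c`)`, is an isomorphism;
* `d = max { i | H^i_{S₊}(M) ≠ 0 }` (in particular `H^i_{S₊}(M) = 0` for `i > d`);
* `a^d(M) = a^d(M̄) ∈ ℤ`. -/
theorem cohomology_special_fiber
    (R : Type) [CommRing R] [IsNoetherianRing R] [IsLocalRing R]
    {n : ℕ} (w : Fin n → ℤ) (hw : ∀ i, 0 < w i)
    (M : Type) [AddCommGroup M]
    [Module (MvPolynomial (Fin n) R) M] [Module R M]
    [IsScalarTower R (MvPolynomial (Fin n) R) M]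
    [Module.Finite (MvPolynomial (Fin n) R) M]
    (ℳ : ℤ → AddSubgroup M) [DirectSum.Decomposition ℳ]
    [SetLike.GradedSMul (weightedHomogeneousSubmodule R w) ℳ]
    (d : ℕ)
    (hd : ringKrullDim ((MvPolynomial (Fin n) R) ⧸
      Module.annihilator (MvPolynomial (Fin n) R)
        (TensorProduct R M (R ⧸ IsLocalRing.maximalIdeal R))) = (d : WithBot (WithTop ℕ))) :
    (∃ g : TensorProduct R
        (RestrictScalars R (MvPolynomial (Fin n) R)
          (lcMod (MvPolynomial (Fin n) R) (fun j : Fin n => (X j : MvPolynomial (Fin n) R)) M d))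
        (R ⧸ IsLocalRing.maximalIdeal R) →ₗ[R]
      RestrictScalars R (MvPolynomial (Fin n) R)
        (lcMod (MvPolynomial (Fin n) R) (fun j : Fin n => (X j : MvPolynomial (Fin n) R))
          (TensorProduct R M (R ⧸ IsLocalRing.maximalIdeal R)) d),
      (∀ (z : ↥(LinearMap.ker (cechD (MvPolynomial (Fin n) R)
            (fun j : Fin n => (X j : MvPolynomial (Fin n) R)) M d)))
        (c : R ⧸ IsLocalRing.maximalIdeal R),
        ∃ zz : ↥(LinearMap.ker (cechD (MvPolynomial (Fin n) R)
            (fun j : Fin n => (X j : MvPolynomial (Fin n) R))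
            (TensorProduct R M (R ⧸ IsLocalRing.maximalIdeal R)) d)),
          (∀ T, (zz : cechC (MvPolynomial (Fin n) R)
              (fun j : Fin n => (X j : MvPolynomial (Fin n) R))
              (TensorProduct R M (R ⧸ IsLocalRing.maximalIdeal R)) d) T =
            cechTmul R (MvPolynomial (Fin n) R) M (R ⧸ IsLocalRing.maximalIdeal R)
              (fun j : Fin n => (X j : MvPolynomial (Fin n) R)) T.1
              ((z : cechC (MvPolynomial (Fin n) R)
                (fun j : Fin n => (X j : MvPolynomial (Fin n) R)) M d) T) c) ∧
          g ((Submodule.Quotient.mk z :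
              lcMod (MvPolynomial (Fin n) R)
                (fun j : Fin n => (X j : MvPolynomial (Fin n) R)) M d) ⊗ₜ[R] c) =
            (Submodule.Quotient.mk zz :
              lcMod (MvPolynomial (Fin n) R)
                (fun j : Fin n => (X j : MvPolynomial (Fin n) R))
                (TensorProduct R M (R ⧸ IsLocalRing.maximalIdeal R)) d)) ∧
      Function.Bijective g) ∧
    (Nontrivial (lcMod (MvPolynomial (Fin n) R)
        (fun j : Fin n => (X j : MvPolynomial (Fin n) R)) M d) ∧
      ∀ i : ℕ, d < i → Subsingleton (lcMod (MvPolynomial (Fin n) R)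
        (fun j : Fin n => (X j : MvPolynomial (Fin n) R)) M i)) ∧
    (∃ e : ℤ,
      IsGreatest {μ : ℤ | lcGradeNonzero (MvPolynomial (Fin n) R)
        (fun j : Fin n => (X j : MvPolynomial (Fin n) R)) M ℳ w d μ} e ∧
      IsGreatest {μ : ℤ | lcGradeNonzero (MvPolynomial (Fin n) R)
        (fun j : Fin n => (X j : MvPolynomial (Fin n) R))
        (TensorProduct R M (R ⧸ IsLocalRing.maximalIdeal R))
        (fun ν => AddSubgroup.closure
          {z : TensorProduct R M (R ⧸ IsLocalRing.maximalIdeal R) |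
            ∃ m ∈ ℳ ν, ∃ c, z = m ⊗ₜ[R] c}) w d μ} e) := by
  have := WeightedHomogeneousSubmodule.gradedMonoid (R := R) (w := w)
  let G := GradingProjections.ofDecomposition (𝒜 := weightedHomogeneousSubmodule R w) ℳ
  obtain ⟨y, hy⟩ := exists_isHomogeneousParameters hw G hd.le
  have hvan (K : Type) [AddCommGroup K] [Module (MvPolynomial (Fin n) R) K]
      (hK : Module.annihilator (MvPolynomial (Fin n) R) M ≤ Module.annihilator _ K) :
      lcVanish _ X K (d + 1) :=
    (hy.of_annihilator_le hK).lcVanish_of_lt d.lt_succ_self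
  have hM : ¬ lcVanish (MvPolynomial (Fin n) R) X M d := fun h =>
    not_lcVanish_tensor_residue (fun i => (hw i).le) G hy hd.ge
      (lcVanish_of_lcVanish_tensor_quotient _ _ hvan h)
  refine ⟨exists_bijective_lcMod_tensor_quotient _ _ hvan, ⟨?_, fun i hi => ?_⟩,
    G.exists_isGreatest_lcGradeNonzero
      (GradingProjections.mem_iff_ofDecomposition_proj_eq (𝒜 := weightedHomogeneousSubmodule R w) ℳ)
      (isWeightedHomogeneous_X R w) (adjoin_range_X ..) hy hM⟩
  · rwa [← not_subsingleton_iff_nontrivial, ← lcVanish_iff_subsingleton]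
  · exact (lcVanish_iff_subsingleton _ i).mp (hy.lcVanish_of_lt hi)
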